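/- Let R be an equitable ribbon with N boxes. If λ is a partition of N whose number of nonzero parts is at most the number of nonempty rows of R and whose largest part λ₁ is at most the number of nonempty columns of R, then λ ∈ supp(R); that is, there exists an LR filling of R of content λ. -/

import Mathlib

/-- A skew shape `outer / inner`: the boxes of the Young diagram of `outer`
that are not boxes of the Young diagram of `inner`. -/
structure SkewShape where
  outer : YoungDiagram
  inner : YoungDiagram
  inner_le : inner ≤ outer

namespace SkewShape

/-- The set of boxes of a skew shape. -/
def cells (A : SkewShape) : Finset (ℕ × ℕ) := A.outer.cells \ A.inner.cells

/-- The size of a skew shape is its number of boxes. -/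
def size (A : SkewShape) : ℕ := A.cells.card

/-- The length of row `i` of a skew shape. -/
def rowLen (A : SkewShape) (i : ℕ) : ℕ := (A.cells.filter fun c => c.1 = i).card

/-- The length of column `j` of a skew shape. -/
def colLen (A : SkewShape) (j : ℕ) : ℕ := (A.cells.filter fun c => c.2 = j).card

/-- The set of indices of nonempty rows. -/
def rowSet (A : SkewShape) : Finset ℕ := A.cells.image Prod.fst

/-- The set of indices of nonempty columns. -/
def colSet (A : SkewShape) : Finset ℕ := A.cells.image Prod.snd

/-- The number of nonempty rows. -/
def numRows (A : SkewShape) : ℕ := A.rowSet.card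

/-- The number of nonempty columns. -/
def numCols (A : SkewShape) : ℕ := A.colSet.card

/-- `rows A`: the multiset of lengths of the nonempty rows of `A`
(equivalently, that sequence sorted into weakly decreasing order). -/
def rows (A : SkewShape) : Multiset ℕ := A.rowSet.val.map A.rowLen

/-- `cols A`: the multiset of lengths of the nonempty columns of `A`. -/
def cols (A : SkewShape) : Multiset ℕ := A.colSet.val.map A.colLen

/-- A skew shape is disconnected if its boxes can be split into two nonempty
parts such that no box of one part shares a row or a column with a box of the
other part. -/
def Disconnected (A : SkewShape) : Prop :=
  ∃ B C : Finset (ℕ × ℕ), B.Nonempty ∧ C.Nonempty ∧ B ∪ C = A.cells ∧ B ∩ C = ∅ ∧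
    ∀ b ∈ B, ∀ c ∈ C, b.1 ≠ c.1 ∧ b.2 ≠ c.2

/-- A skew shape is connected if it is nonempty and not disconnected. -/
def Connected (A : SkewShape) : Prop := A.cells.Nonempty ∧ ¬ A.Disconnected

/-- A ribbon is a connected skew shape containing no 2×2 block of boxes. -/
def Ribbon (A : SkewShape) : Prop :=
  A.Connected ∧ ∀ i j : ℕ, ¬ ((i, j) ∈ A.cells ∧ (i, j + 1) ∈ A.cells ∧
    (i + 1, j) ∈ A.cells ∧ (i + 1, j + 1) ∈ A.cells)

/-- The lengths of any two nonempty rows differ by at most one. -/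
def RowEquitable (A : SkewShape) : Prop :=
  ∀ i ∈ A.rowSet, ∀ i' ∈ A.rowSet, A.rowLen i ≤ A.rowLen i' + 1

/-- The lengths of any two nonempty columns differ by at most one. -/
def ColEquitable (A : SkewShape) : Prop :=
  ∀ j ∈ A.colSet, ∀ j' ∈ A.colSet, A.colLen j ≤ A.colLen j' + 1

/-- Equitable: both row equitable and column equitable. -/
def Equitable (A : SkewShape) : Prop := A.RowEquitable ∧ A.ColEquitable

/-- A filling of a skew shape is semistandard if its entries are positive
integers, weakly increasing along rows and strictly increasing down columns. -/
def IsSsyt (A : SkewShape) (T : ℕ × ℕ → ℕ) : Prop :=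
  (∀ c ∈ A.cells, 1 ≤ T c) ∧
  (∀ i j j', (i, j) ∈ A.cells → (i, j') ∈ A.cells → j ≤ j' → T (i, j) ≤ T (i, j')) ∧
  (∀ i i' j, (i, j) ∈ A.cells → (i', j) ∈ A.cells → i < i' → T (i, j) < T (i', j))

end SkewShape

/-- `c` comes weakly before `d` in the reverse reading order (right to left
along rows, rows top to bottom). -/
def ReadsBefore (c d : ℕ × ℕ) : Prop := c.1 < d.1 ∨ (c.1 = d.1 ∧ d.2 ≤ c.2)

instance : DecidableRel ReadsBefore := fun c d => by unfold ReadsBefore; infer_instance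

namespace SkewShape

/-- The number of boxes of `A` filled with the entry `k` by the filling `T`. -/
def content (A : SkewShape) (T : ℕ × ℕ → ℕ) (k : ℕ) : ℕ :=
  (A.cells.filter fun c => T c = k).card

/-- A Littlewood--Richardson filling: a semistandard filling such that every
prefix of the reverse reading word contains at least as many `k`'s as
`(k+1)`'s, for every positive `k`. -/
def IsLR (A : SkewShape) (T : ℕ × ℕ → ℕ) : Prop :=
  A.IsSsyt T ∧ ∀ d ∈ A.cells, ∀ k : ℕ,
    (A.cells.filter fun c => T c = k + 2 ∧ ReadsBefore c d).card ≤
    (A.cells.filter fun c => T c = k + 1 ∧ ReadsBefore c d).card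

end SkewShape

/-- The `i`-th largest part (0-indexed) of a multiset of natural numbers,
i.e. the `i`-th entry of the multiset sorted into weakly decreasing order. -/
def part (lam : Multiset ℕ) (i : ℕ) : ℕ := (lam.sort (· ≥ ·)).getD i 0

namespace SkewShape

/-- The support of a skew shape `A`: the set of partitions `lam` (multisets of
positive integers) for which there exists an LR filling of `A` of content `lam`. -/
def supp (A : SkewShape) : Set (Multiset ℕ) :=
  {lam | 0 ∉ lam ∧ ∃ T : ℕ × ℕ → ℕ, A.IsLR T ∧ ∀ i : ℕ, A.content T (i + 1) = part lam i}

/-- The set of LR fillings of `A` of content `lam` (normalized to vanish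
outside the boxes of `A`). -/
def LRset (A : SkewShape) (lam : Multiset ℕ) : Set ((ℕ × ℕ) → ℕ) :=
  {T | A.IsLR T ∧ (∀ c, c ∉ A.cells → T c = 0) ∧ ∀ i : ℕ, A.content T (i + 1) = part lam i}

/-- `s_A − s_B` is Schur-positive: for every partition, the number of LR
fillings of `B` of that content is at most the number for `A`. -/
def SchurPosDiff (A B : SkewShape) : Prop :=
  ∀ lam : Multiset ℕ, (B.LRset lam).ncard ≤ (A.LRset lam).ncard

end SkewShape

/-- The sum of the `k` largest parts of a multiset of natural numbers. -/
def psum (lam : Multiset ℕ) (k : ℕ) : ℕ := ((lam.sort (· ≥ ·)).take k).sum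

/-- Dominance order: `DomLe lam mu` means `lam ⊴ mu`, i.e. for every `k` the
sum of the `k` largest parts of `lam` is at most that of `mu`. -/
def DomLe (lam mu : Multiset ℕ) : Prop := ∀ k : ℕ, psum lam k ≤ psum mu k

/-- The conjugate (transpose) of a partition given as a multiset: its parts
are the numbers `#{x ∈ lam | x ≥ j}` for `j = 1, 2, …`. -/
def conj (lam : Multiset ℕ) : Multiset ℕ :=
  ((Finset.range lam.sum).val.map fun j => Multiset.card (lam.filter fun x => j + 1 ≤ x)).filter
    fun y => y ≠ 0

/-!
Reading a ribbon from its top right to its bottom left end, each box either lies below its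
predecessor or to the left of it. Hence an LR filling of the ribbon of content `λ` is the same as a
standard Young tableau of shape `λ` whose descents are exactly the ends of the non-final rows of the
ribbon. Transposing tableaux complements the descent set and so exchanges rows and columns; in an
equitable ribbon either all rows but the last or all columns but the first have length at least two,
and we may assume the former.

Such a tableau is a chain of horizontal strips whose sizes are the row lengths of the ribbon, each
filled from left to right, with a descent between consecutive strips. It is built by induction on
the number of rows of the ribbon: the last strip takes as many cells as possible from the bottom row
of `λ` and the rest from bottoms of other columns, in such a way that the remaining shape still has
neither too many rows nor too many columns.
-/
theorem exists_cells_eq_insert (ν : YoungDiagram) (d : ℕ × ℕ) (hd : ∀ e < d, e ∈ ν) :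
    ∃ μ : YoungDiagram, μ.cells = insert d ν.cells := by
  refine ⟨⟨insert d ν.cells, fun a b hba ha => ?_⟩, rfl⟩
  simp only [Finset.coe_insert, Set.mem_insert_iff, Finset.mem_coe, YoungDiagram.mem_cells] at ha ⊢
  rcases ha with rfl | ha
  · exact hba.eq_or_lt.imp_right (hd b)
  · exact Or.inr (ν.up_left_mem hba.1 hba.2 ha)

section InsertCell

variable {ν μ : YoungDiagram} {d : ℕ × ℕ}

theorem mem_iff_of_cells_eq_insert (hμ : μ.cells = insert d ν.cells) {e : ℕ × ℕ} :
    e ∈ μ ↔ e = d ∨ e ∈ ν := by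
  rw [← YoungDiagram.mem_cells, hμ, Finset.mem_insert, YoungDiagram.mem_cells]

theorem mem_of_lt_of_cells_eq_insert (hμ : μ.cells = insert d ν.cells) {e : ℕ × ℕ} (he : e < d) :
    e ∈ ν := by
  have heμ : e ∈ μ := μ.isLowerSet he.le ((mem_iff_of_cells_eq_insert hμ).2 (Or.inl rfl))
  exact ((mem_iff_of_cells_eq_insert hμ).1 heμ).resolve_left he.ne

theorem notMem_of_lt_of_cells_eq_insert (hd : d ∉ ν) (hμ : μ.cells = insert d ν.cells)
    {e : ℕ × ℕ} (he : d < e) : e ∉ μ := fun heμ =>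
  ((mem_iff_of_cells_eq_insert hμ).1 heμ).elim he.ne' fun heν => hd (ν.isLowerSet he.le heν)

theorem card_of_cells_eq_insert (hd : d ∉ ν) (hμ : μ.cells = insert d ν.cells) :
    μ.card = ν.card + 1 := by
  rw [YoungDiagram.card, hμ, Finset.card_insert_of_notMem (by simpa using hd)]

theorem rowLen_of_cells_eq_insert (hd : d ∉ ν) (hμ : μ.cells = insert d ν.cells) (i : ℕ) :
    μ.rowLen i = ν.rowLen i + if d.1 = i then 1 else 0 := by
  rw [YoungDiagram.rowLen_eq_card, YoungDiagram.rowLen_eq_card, YoungDiagram.row,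
    YoungDiagram.row, hμ, Finset.filter_insert]
  split_ifs with h
  · rw [Finset.card_insert_of_notMem (by simp [hd])]
  · rfl

end InsertCell

/-- `HasTableau D n μ c` says that some standard Young tableau of shape `μ` with entries
`0, …, n` has its entry `n` in the cell `c` and, for `k < n`, has a descent at `k` (the entry
`k + 1` lies in a lower row than `k`) exactly when `D k`. The tableau is encoded as the chain of
the shapes formed by its entries `0, …, k`. -/
inductive HasTableau (D : ℕ → Prop) : ℕ → YoungDiagram → ℕ × ℕ → Prop
  | single {μ : YoungDiagram} (hμ : μ.cells = {(0, 0)}) : HasTableau D 0 μ (0, 0)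
  | insert {n : ℕ} {ν μ : YoungDiagram} {c d : ℕ × ℕ} (h : HasTableau D n ν c) (hd : d ∉ ν)
      (hμ : μ.cells = Insert.insert d ν.cells) (hD : D n ↔ c.1 < d.1) : HasTableau D (n + 1) μ d

namespace HasTableau

variable {D : ℕ → Prop} {n : ℕ} {μ ν : YoungDiagram} {c : ℕ × ℕ}

theorem mem (h : HasTableau D n μ c) : c ∈ μ := by
  cases h with
  | single hμ => simp [← YoungDiagram.mem_cells, hμ]
  | insert _ _ hμ _ => exact (mem_iff_of_cells_eq_insert hμ).2 (Or.inl rfl)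

theorem notMem_of_lt (h : HasTableau D n μ c) {e : ℕ × ℕ} (he : c < e) : e ∉ μ := by
  cases h with
  | single hμ => simpa [← YoungDiagram.mem_cells, hμ] using he.ne'
  | insert _ hd hμ _ => exact notMem_of_lt_of_cells_eq_insert hd hμ he

theorem fst_lt_iff_snd_le (h : HasTableau D n ν c) {d : ℕ × ℕ} (hd : d ∉ ν)
    (hμ : μ.cells = Insert.insert d ν.cells) : c.1 < d.1 ↔ d.2 ≤ c.2 := by
  constructor
  · intro hlt
    by_contra! hc
    exact h.notMem_of_lt (e := (c.1, d.2)) (Prod.mk_lt_mk.2 (Or.inr ⟨le_rfl, hc⟩))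
      (mem_of_lt_of_cells_eq_insert hμ (Prod.mk_lt_mk.2 (Or.inl ⟨hlt, le_rfl⟩)))
  · intro hle
    by_contra! hc
    exact hd (ν.isLowerSet ⟨hc, hle⟩ h.mem)

theorem transpose (h : HasTableau D n μ c) :
    HasTableau (fun k => ¬ D k) n μ.transpose c.swap := by
  induction h with
  | @single μ hμ =>
    refine single ?_
    ext ⟨i, j⟩
    have := YoungDiagram.mem_cells (μ := μ) (c := (j, i))
    simp_all [YoungDiagram.mem_transpose, and_comm]
  | @insert n ν μ c d h hd hμ hD ih =>
    refine ih.insert (by simpa [YoungDiagram.mem_transpose] using hd) ?_ ?_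
    · ext e
      simp [YoungDiagram.mem_transpose, mem_iff_of_cells_eq_insert hμ, Prod.swap_eq_iff_eq_swap]
    · rw [hD, h.fst_lt_iff_snd_le hd hμ, not_le, Prod.fst_swap, Prod.fst_swap]

end HasTableau

/-- `μ / ν` is a horizontal strip: it has at most one cell in each column. -/
structure IsHorizontalStrip (ν μ : YoungDiagram) : Prop where
  le : ν ≤ μ
  mem_of_succ_mem : ∀ i j, (i + 1, j) ∈ μ → (i, j) ∈ ν

namespace IsHorizontalStrip

variable {ν μ : YoungDiagram}

theorem mem_of_fst_lt (hs : IsHorizontalStrip ν μ) {d e : ℕ × ℕ} (he : e ∈ μ) (h1 : d.1 < e.1)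
    (h2 : d.2 ≤ e.2) : d ∈ ν :=
  hs.mem_of_succ_mem _ _ (μ.up_left_mem h1 h2 he)

theorem exists_leftmost (hs : IsHorizontalStrip ν μ) (hcard : ν.card < μ.card) :
    ∃ d ∈ μ, d ∉ ν ∧ ∀ e ∈ μ, e ∉ ν → e ≠ d → d.2 < e.2 ∧ e.1 ≤ d.1 := by
  have hne : (μ.cells \ ν.cells).Nonempty :=
    Finset.sdiff_nonempty_of_card_lt_card hcard
  obtain ⟨d, hd, hmin⟩ := Finset.exists_min_image _ Prod.snd hne
  simp only [Finset.mem_sdiff, YoungDiagram.mem_cells] at hd hmin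
  refine ⟨d, hd.1, hd.2, fun e he heν hne => ?_⟩
  have hle : d.2 ≤ e.2 := hmin e ⟨he, heν⟩
  have hfst : e.1 ≤ d.1 := not_lt.1 fun hlt => hd.2 (hs.mem_of_fst_lt he hlt hle)
  refine ⟨lt_of_le_of_ne hle fun hsnd => ?_, hfst⟩
  exact heν (hs.mem_of_fst_lt hd.1 (lt_of_le_of_ne hfst fun h => hne (Prod.ext h hsnd.symm))
    hsnd.ge)

theorem exists_insert (hs : IsHorizontalStrip ν μ) (hcard : ν.card < μ.card) :
    ∃ d ν', d ∈ μ ∧ d ∉ ν ∧ ν'.cells = insert d ν.cells ∧ IsHorizontalStrip ν' μ ∧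
      ∀ e ∈ μ, e ∉ ν' → d.2 < e.2 ∧ e.1 ≤ d.1 := by
  obtain ⟨d, hdμ, hdν, hleft⟩ := hs.exists_leftmost hcard
  have hbelow : ∀ e < d, e ∈ ν := fun e he => by
    by_contra heν
    exact (hleft e (μ.isLowerSet he.le hdμ) heν he.ne).1.not_ge he.le.2
  obtain ⟨ν', hν'⟩ := exists_cells_eq_insert ν d hbelow
  have hmem : ∀ e, e ∈ ν' ↔ e = d ∨ e ∈ ν := fun e => mem_iff_of_cells_eq_insert hν'
  refine ⟨d, ν', hdμ, hdν, hν', ⟨fun e he => ?_, fun i j h => ?_⟩, fun e he heν' => ?_⟩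
  · exact ((hmem e).1 he).elim (fun h => h ▸ hdμ) (hs.le ·)
  · exact (hmem _).2 (Or.inr (hs.mem_of_succ_mem i j h))
  · rw [hmem, not_or] at heν'
    exact hleft e he heν'.2 heν'.1

end IsHorizontalStrip

namespace HasTableau

variable {D : ℕ → Prop} {n m : ℕ} {μ ν : YoungDiagram} {c : ℕ × ℕ}

theorem exists_extension_of_forall_not (h : HasTableau D n ν c) (hs : IsHorizontalStrip ν μ)
    (hright : ∀ d ∈ μ, d ∉ ν → c.2 < d.2) (hcard : μ.card = ν.card + m)
    (hD : ∀ k, n ≤ k → k < n + m → ¬ D k) :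
    ∃ c', HasTableau D (n + m) μ c' ∧ c'.1 ≤ c.1 ∧ ∀ d ∈ μ, d ∉ ν → c'.1 ≤ d.1 := by
  induction m generalizing n ν c with
  | zero =>
    obtain rfl : ν = μ := YoungDiagram.ext (Finset.eq_of_subset_of_card_le hs.le hcard.le)
    exact ⟨c, h, le_rfl, fun d hd hd' => absurd hd hd'⟩
  | succ m ih =>
    obtain ⟨d, ν', hdμ, hdν, hν', hs', hleft⟩ := hs.exists_insert (by omega)
    have hle : d.1 ≤ c.1 := not_lt.1 fun hlt =>
      (hright d hdμ hdν).not_ge ((h.fst_lt_iff_snd_le hdν hν').1 hlt)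
    have h' : HasTableau D (n + 1) ν' d :=
      h.insert hdν hν' (iff_of_false (hD n le_rfl (by omega)) hle.not_gt)
    have hcard' : ν'.card = ν.card + 1 := card_of_cells_eq_insert hdν hν'
    obtain ⟨c', hc', hc'd, hc'low⟩ := ih h' hs' (fun e he he' => (hleft e he he').1) (by omega)
      (fun k hk hk' => hD k (by omega) (by omega))
    refine ⟨c', by rwa [add_right_comm] at hc', hc'd.trans hle, fun e he heν => ?_⟩
    rcases eq_or_ne e d with rfl | hne
    · exact hc'd
    · exact hc'low e he (by rw [mem_iff_of_cells_eq_insert hν']; tauto)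

theorem exists_extension_of_descent (h : HasTableau D n ν c) (hs : IsHorizontalStrip ν μ)
    (hcard : μ.card = ν.card + m) (hDn : D n) (hD : ∀ k, n < k → k < n + m → ¬ D k)
    (hbelow : ∃ d ∈ μ, d ∉ ν ∧ c.1 < d.1) :
    ∃ c', HasTableau D (n + m) μ c' ∧ ∀ d ∈ μ, d ∉ ν → c'.1 ≤ d.1 := by
  obtain ⟨d₀, hd₀μ, hd₀ν, hlt⟩ := hbelow
  have hcard' : ν.card < μ.card :=
    Finset.card_lt_card ⟨hs.le, fun hsub => hd₀ν (hsub hd₀μ)⟩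
  obtain ⟨d, ν', hdμ, hdν, hν', hs', hleft⟩ := hs.exists_insert hcard'
  have hcd : c.1 < d.1 := by
    by_cases hmem : d₀ ∈ ν'
    · rw [((mem_iff_of_cells_eq_insert hν').1 hmem).resolve_right hd₀ν] at hlt
      exact hlt
    · exact hlt.trans_le (hleft d₀ hd₀μ hmem).2
  have h' : HasTableau D (n + 1) ν' d := h.insert hdν hν' (iff_of_true hDn hcd)
  have hcardν' : ν'.card = ν.card + 1 := card_of_cells_eq_insert hdν hν'
  obtain ⟨c', hc', hc'd, hc'low⟩ := h'.exists_extension_of_forall_not (m := m - 1) hs'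
    (fun e he he' => (hleft e he he').1) (by omega) (fun k hk hk' => hD k (by omega) (by omega))
  refine ⟨c', by rwa [show n + 1 + (m - 1) = n + m by omega] at hc', fun e he heν => ?_⟩
  rcases eq_or_ne e d with rfl | hne
  · exact hc'd
  · exact hc'low e he (by rw [mem_iff_of_cells_eq_insert hν']; tauto)

end HasTableau

section RowLengths

variable (μ : YoungDiagram)

theorem rowLen_pos_iff_lt_colLen (i : ℕ) : 0 < μ.rowLen i ↔ i < μ.colLen 0 := by
  rw [← YoungDiagram.mem_iff_lt_rowLen, YoungDiagram.mem_iff_lt_colLen]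

theorem card_eq_sum_rowLen : μ.card = ∑ i ∈ Finset.range (μ.colLen 0), μ.rowLen i := by
  have hmaps : ∀ c ∈ μ.cells, c.1 ∈ Finset.range (μ.colLen 0) := fun c hc =>
    Finset.mem_range.2 (YoungDiagram.mem_iff_lt_colLen.1 (μ.up_left_mem le_rfl (Nat.zero_le _) hc))
  rw [YoungDiagram.card, Finset.card_eq_sum_card_fiberwise hmaps]
  exact Finset.sum_congr rfl fun i _ => μ.rowLen_eq_card.symm

variable {μ} {e : ℕ}

theorem colLen_zero_le_iff {i : ℕ} : μ.colLen 0 ≤ i ↔ μ.rowLen i = 0 := by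
  have := rowLen_pos_iff_lt_colLen μ i
  omega

theorem rowLen_le_of_le {ν : YoungDiagram} (hle : ν ≤ μ) (i : ℕ) : ν.rowLen i ≤ μ.rowLen i :=
  le_of_forall_lt fun _ hj =>
    YoungDiagram.mem_iff_lt_rowLen.1 (hle (YoungDiagram.mem_iff_lt_rowLen.2 hj))

theorem colLen_zero_le_of_le {ν : YoungDiagram} (hle : ν ≤ μ) : ν.colLen 0 ≤ μ.colLen 0 :=
  colLen_zero_le_iff.2 <| Nat.eq_zero_of_le_zero <|
    (rowLen_le_of_le hle _).trans (colLen_zero_le_iff.1 le_rfl).le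

theorem card_eq_rowLen_zero_add_sum (he : μ.colLen 0 = e + 1) :
    μ.card = μ.rowLen 0 + ∑ i ∈ Finset.range e, μ.rowLen (i + 1) := by
  rw [card_eq_sum_rowLen, he, Finset.sum_range_succ', add_comm]

theorem rowLen_zero_add_le_card (he : μ.colLen 0 = e + 1) :
    μ.rowLen 0 + μ.rowLen e * e ≤ μ.card := by
  rw [card_eq_rowLen_zero_add_sum he]
  have := Finset.card_nsmul_le_sum (Finset.range e) (fun i => μ.rowLen (i + 1)) (μ.rowLen e)
    fun i hi => μ.rowLen_anti _ _ (by simpa [Nat.succ_le_iff] using hi)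
  simpa [mul_comm] using this

theorem card_le_rowLen_zero_add (he : μ.colLen 0 = e + 1) :
    μ.card ≤ μ.rowLen 0 + μ.rowLen 1 * e := by
  rw [card_eq_rowLen_zero_add_sum he]
  have := Finset.sum_le_card_nsmul (Finset.range e) (fun i => μ.rowLen (i + 1)) (μ.rowLen 1)
    fun i _ => μ.rowLen_anti _ _ (by omega)
  simpa [mul_comm] using this

theorem rowLen_mul_le_card (he : μ.colLen 0 = e + 1) :
    μ.rowLen e * (e + 1) ≤ μ.card := by
  have := rowLen_zero_add_le_card he
  have := μ.rowLen_anti 0 e (Nat.zero_le e)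
  rw [Nat.mul_succ]
  omega

theorem card_le_rowLen_zero_mul (he : μ.colLen 0 = e + 1) :
    μ.card ≤ μ.rowLen 0 * (e + 1) := by
  have := card_le_rowLen_zero_add he
  have := Nat.mul_le_mul_right e (μ.rowLen_anti 0 1 zero_le_one)
  rw [Nat.mul_succ]
  omega

theorem rowLen_add_rowLen_zero_add_le_card (he : μ.colLen 0 = e + 1) (he1 : 1 ≤ e) :
    μ.rowLen e + μ.rowLen 0 + e ≤ μ.card + 1 := by
  have hlow := rowLen_zero_add_le_card he
  have hpos := (rowLen_pos_iff_lt_colLen μ e).2 (by omega)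
  nlinarith

theorem two_mul_rowLen_one_le_card : 2 * μ.rowLen 1 ≤ μ.card := by
  rcases Nat.lt_or_ge 1 (μ.colLen 0) with h | h
  · have hsum := card_eq_rowLen_zero_add_sum (μ := μ) (e := μ.colLen 0 - 1) (by omega)
    have h1 : μ.rowLen 1 ≤ ∑ i ∈ Finset.range (μ.colLen 0 - 1), μ.rowLen (i + 1) :=
      Finset.single_le_sum (f := fun i => μ.rowLen (i + 1)) (fun _ _ => Nat.zero_le _)
        (Finset.mem_range.2 (show 0 < μ.colLen 0 - 1 by omega))
    have h0 := μ.rowLen_anti 0 1 zero_le_one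
    omega
  · have := rowLen_pos_iff_lt_colLen μ 1
    omega

end RowLengths

section RemoveBottoms

variable (μ : YoungDiagram) (C : Finset ℕ)
  (hC : ∀ i j j', j ∈ C → j' ∉ C → j < j' → (i, j') ∈ μ → (i + 1, j) ∈ μ)

/-- The diagram obtained from `μ` by removing the bottom cell of every column in `C`. The
hypothesis `hC` guarantees that what remains is a Young diagram. -/
def removeBottoms : YoungDiagram where
  cells := μ.cells.filter fun c => c.2 ∈ C → (c.1 + 1, c.2) ∈ μ
  isLowerSet := by
    rintro ⟨i', j'⟩ ⟨i, j⟩ ⟨hi, hj⟩ h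
    simp only [Finset.coe_filter, YoungDiagram.mem_cells, Set.mem_ofPred_eq] at h ⊢
    refine ⟨μ.up_left_mem hi hj h.1, fun hjC => ?_⟩
    by_cases hj'C : j' ∈ C
    · exact μ.up_left_mem (Nat.add_le_add_right hi 1) hj (h.2 hj'C)
    · have hlt : j < j' := lt_of_le_of_ne hj fun h => hj'C (h ▸ hjC)
      exact μ.up_left_mem (Nat.add_le_add_right hi 1) le_rfl (hC i' j j' hjC hj'C hlt h.1)

variable {μ C hC}

theorem mem_removeBottoms {c : ℕ × ℕ} :
    c ∈ removeBottoms μ C hC ↔ c ∈ μ ∧ (c.2 ∈ C → (c.1 + 1, c.2) ∈ μ) := by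
  rw [← YoungDiagram.mem_cells]
  simp [removeBottoms]

variable (hC)

theorem isHorizontalStrip_removeBottoms : IsHorizontalStrip (removeBottoms μ C hC) μ where
  le _ hc := (mem_removeBottoms.1 hc).1
  mem_of_succ_mem i _ h :=
    mem_removeBottoms.2 ⟨μ.up_left_mem (Nat.le_succ i) le_rfl h, fun _ => h⟩

theorem mem_and_notMem_removeBottoms_iff {i j : ℕ} :
    (i, j) ∈ μ ∧ (i, j) ∉ removeBottoms μ C hC ↔ j ∈ C ∧ i + 1 = μ.colLen j := by
  rw [mem_removeBottoms, YoungDiagram.mem_iff_lt_colLen, YoungDiagram.mem_iff_lt_colLen]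
  by_cases hj : j ∈ C
  · simp only [hj, forall_const, true_and]
    omega
  · simp [hj]

theorem card_removeBottoms_add (hpos : ∀ j ∈ C, j < μ.rowLen 0) :
    (removeBottoms μ C hC).card + C.card = μ.card := by
  have himage : μ.cells \ (removeBottoms μ C hC).cells = C.image fun j => (μ.colLen j - 1, j) := by
    ext ⟨i, j⟩
    have hiff := mem_and_notMem_removeBottoms_iff hC (i := i) (j := j)
    simp only [Finset.mem_sdiff, YoungDiagram.mem_cells, hiff, Finset.mem_image, Prod.mk.injEq]
    constructor
    · rintro ⟨hj, hi⟩
      exact ⟨j, hj, by omega, rfl⟩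
    · rintro ⟨_, hj, rfl, rfl⟩
      have := YoungDiagram.mem_iff_lt_colLen.1 (YoungDiagram.mem_iff_lt_rowLen.2 (hpos _ hj))
      exact ⟨hj, by omega⟩
  have hinj : Function.Injective fun j => (μ.colLen j - 1, j) := fun _ _ h => congrArg Prod.snd h
  rw [← Finset.card_image_of_injective C hinj, ← himage, add_comm]
  exact Finset.card_sdiff_add_card_eq_card (isHorizontalStrip_removeBottoms hC).le

end RemoveBottoms

/-- The columns losing their bottom cell when a horizontal strip of size `b` is removed from `μ`
with as few cells in rows above row `e` as possible after taking `h` cells from row `e`. -/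
def stripColumns (μ : YoungDiagram) (e b h : ℕ) : Finset ℕ :=
  Finset.Ico (μ.rowLen e - h) (μ.rowLen e) ∪ Finset.Ico (μ.rowLen 0 - (b - h)) (μ.rowLen 0)

section StripColumns

variable {μ : YoungDiagram} {e b h : ℕ}

theorem mem_stripColumns {j : ℕ} : j ∈ stripColumns μ e b h ↔
    (μ.rowLen e - h ≤ j ∧ j < μ.rowLen e) ∨ (μ.rowLen 0 - (b - h) ≤ j ∧ j < μ.rowLen 0) := by
  simp [stripColumns]

theorem card_stripColumns (hq : h ≤ μ.rowLen e) (hb : h ≤ b)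
    (hle : b + μ.rowLen e ≤ μ.rowLen 0 + h) : (stripColumns μ e b h).card = b := by
  rw [stripColumns, Finset.card_union_of_disjoint, Nat.card_Ico, Nat.card_Ico]
  · omega
  · rw [Finset.disjoint_left]
    intro j
    simp only [Finset.mem_Ico]
    omega

theorem succ_mem_of_mem_stripColumns {i j j' : ℕ} (hj : j ∈ stripColumns μ e b h)
    (hj' : j' ∉ stripColumns μ e b h) (hlt : j < j') (hij' : (i, j') ∈ μ) : (i + 1, j) ∈ μ := by
  rw [mem_stripColumns] at hj hj'
  have h0 : j' < μ.rowLen 0 := (YoungDiagram.mem_iff_lt_rowLen.1 hij').trans_le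
    (μ.rowLen_anti _ _ (Nat.zero_le i))
  have hi : i < e := by
    by_contra! hi
    have := μ.rowLen_anti _ _ hi
    have := YoungDiagram.mem_iff_lt_rowLen.1 hij'
    omega
  rw [YoungDiagram.mem_iff_lt_rowLen]
  have := μ.rowLen_anti (i + 1) e hi
  omega

theorem exists_isHorizontalStrip (he : μ.colLen 0 = e + 1) (hq : h ≤ μ.rowLen e) (hb : h ≤ b)
    (hle : b + μ.rowLen e ≤ μ.rowLen 0 + h) :
    ∃ ν, IsHorizontalStrip ν μ ∧ ν.card + b = μ.card ∧
      ν.rowLen 0 ≤ max (μ.rowLen 1) (μ.rowLen 0 - (b - h)) ∧ ν.rowLen e = μ.rowLen e - h ∧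
      (h < b → ∃ d ∈ μ, d ∉ ν ∧ d.1 < e) := by
  have hrow : μ.rowLen (e + 1) = 0 := by
    have := rowLen_pos_iff_lt_colLen μ (e + 1)
    omega
  have hle0 : μ.rowLen e ≤ μ.rowLen 0 := μ.rowLen_anti _ _ (Nat.zero_le e)
  have hC : ∀ i j j', j ∈ stripColumns μ e b h → j' ∉ stripColumns μ e b h → j < j' →
      (i, j') ∈ μ → (i + 1, j) ∈ μ := fun i j j' => succ_mem_of_mem_stripColumns
  refine ⟨removeBottoms μ _ hC, isHorizontalStrip_removeBottoms hC, ?_, ?_, ?_, fun hlt => ?_⟩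
  · rw [← card_removeBottoms_add hC fun j hj => by rw [mem_stripColumns] at hj; omega,
      card_stripColumns hq hb hle]
  · by_contra! hlt
    rw [← YoungDiagram.mem_iff_lt_rowLen, mem_removeBottoms, mem_stripColumns,
      YoungDiagram.mem_iff_lt_rowLen, YoungDiagram.mem_iff_lt_rowLen, zero_add] at hlt
    omega
  · refine eq_of_forall_lt_iff fun j => ?_
    rw [← YoungDiagram.mem_iff_lt_rowLen, mem_removeBottoms, mem_stripColumns,
      YoungDiagram.mem_iff_lt_rowLen, YoungDiagram.mem_iff_lt_rowLen, hrow]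
    dsimp only
    omega
  · set j := μ.rowLen 0 - 1
    have hj : j ∈ stripColumns μ e b h := mem_stripColumns.2 (by omega)
    have hpos : 0 < μ.colLen j := YoungDiagram.mem_iff_lt_colLen.1
      (YoungDiagram.mem_iff_lt_rowLen.2 (by omega : j < μ.rowLen 0))
    obtain ⟨hμ, hν⟩ := (mem_and_notMem_removeBottoms_iff hC).2
      ⟨hj, Nat.sub_add_cancel hpos⟩
    refine ⟨_, hμ, hν, lt_of_not_ge fun hge => ?_⟩
    have hlt' : j < μ.rowLen e :=
      (YoungDiagram.mem_iff_lt_rowLen.1 hμ).trans_le (μ.rowLen_anti _ _ hge)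
    omega

end StripColumns

/-- The index of the first box of run `i` when consecutive runs have lengths `α 0, α 1, …`. -/
def runStart (α : ℕ → ℕ) (i : ℕ) : ℕ := ∑ j ∈ Finset.range i, α j

theorem runStart_succ (α : ℕ → ℕ) (i : ℕ) : runStart α (i + 1) = runStart α i + α i :=
  Finset.sum_range_succ α i

/-- The runs `0, …, r` have lengths `a` or `a + 1`, and only the last may have length one. -/
structure AlmostEqualRuns (a : ℕ) (α : ℕ → ℕ) (r : ℕ) : Prop where
  pos : 1 ≤ a
  le_run : ∀ i ≤ r, a ≤ α i
  run_le : ∀ i ≤ r, α i ≤ a + 1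
  two_le_run : ∀ i < r, 2 ≤ α i

namespace AlmostEqualRuns

variable {a r : ℕ} {α : ℕ → ℕ}

theorem of_succ (hα : AlmostEqualRuns a α (r + 1)) : AlmostEqualRuns a α r where
  pos := hα.pos
  le_run i hi := hα.le_run i (by omega)
  run_le i hi := hα.run_le i (by omega)
  two_le_run i hi := hα.two_le_run i (by omega)

theorem mul_le_runStart (hα : AlmostEqualRuns a α r) : a * r ≤ runStart α r := by
  have := Finset.card_nsmul_le_sum (Finset.range r) α a
    fun i hi => hα.le_run i (Finset.mem_range.1 hi).le
  simpa [runStart, mul_comm] using this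

theorem runStart_le_mul (hα : AlmostEqualRuns a α r) : runStart α r ≤ (a + 1) * r := by
  have := Finset.sum_le_card_nsmul (Finset.range r) α (a + 1)
    fun i hi => hα.run_le i (Finset.mem_range.1 hi).le
  simpa [runStart, mul_comm] using this

theorem two_mul_le_runStart (hα : AlmostEqualRuns a α r) : 2 * r ≤ runStart α r := by
  have := Finset.card_nsmul_le_sum (Finset.range r) α 2
    fun i hi => hα.two_le_run i (Finset.mem_range.1 hi)
  simpa [runStart, mul_comm] using this

end AlmostEqualRuns

/-- The diagram `μ` has as many cells as a ribbon with rows of lengths `α 0, …, α r`, and at most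
as many rows (`r + 1`) and columns (`∑ i ≤ r, α i - r`) as that ribbon. -/
structure FitsRuns (μ : YoungDiagram) (α : ℕ → ℕ) (r : ℕ) : Prop where
  card_eq : μ.card = runStart α (r + 1)
  colLen_le : μ.colLen 0 ≤ r + 1
  rowLen_add_le : μ.rowLen 0 + r ≤ runStart α (r + 1)

/-- A sufficient condition for the tableau of shape `μ` with row-runs `α 0, …, α r` to be
available with its last entry strictly above the bottom row of `μ`. -/
structure IsFlexible (μ : YoungDiagram) (α : ℕ → ℕ) (r : ℕ) : Prop where
  two_le_run : 2 ≤ α r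
  mul_add_two_le_card : ∀ e, μ.colLen 0 = e + 1 → μ.rowLen e * (e + 1) + 2 ≤ μ.card
  rowLen_ne_run : μ.colLen 0 = r + 1 → μ.rowLen r ≠ α r

section FitsRuns

variable {μ : YoungDiagram} {α : ℕ → ℕ} {a r e : ℕ}

theorem FitsRuns.exists_colLen_eq (hμ : FitsRuns μ α (r + 1)) :
    ∃ e, 1 ≤ e ∧ e ≤ r + 1 ∧ μ.colLen 0 = e + 1 := by
  have hrows := hμ.colLen_le
  have hcols := hμ.rowLen_add_le
  have hcard := hμ.card_eq
  have hsum := card_eq_sum_rowLen μ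
  have : μ.colLen 0 ≠ 0 := fun h => by
    rw [h, Finset.sum_range_zero] at hsum
    omega
  have : μ.colLen 0 ≠ 1 := fun h => by
    rw [h, Finset.sum_range_one] at hsum
    omega
  exact ⟨μ.colLen 0 - 1, by omega, by omega, by omega⟩

theorem run_le_rowLen_zero (hα : AlmostEqualRuns a α (r + 1)) (hμ : FitsRuns μ α (r + 1)) :
    α (r + 1) ≤ μ.rowLen 0 := by
  obtain ⟨e, -, her, he⟩ := hμ.exists_colLen_eq
  have hcard := hμ.card_eq
  rw [runStart_succ] at hcard
  have hM := hα.mul_le_runStart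
  have hb := hα.run_le _ le_rfl
  have hup := card_le_rowLen_zero_mul he
  by_contra! hlt
  have hmul : μ.rowLen 0 * (e + 1) ≤ μ.rowLen 0 * (r + 1 + 1) := Nat.mul_le_mul_left _ (by omega)
  have hmul' : μ.rowLen 0 * (r + 1) ≤ a * (r + 1) := Nat.mul_le_mul_right _ (by omega)
  rw [Nat.mul_succ _ (r + 1)] at hmul
  omega

theorem IsFlexible.rowLen_lt_rowLen_zero (hflex : IsFlexible μ α r) (he : μ.colLen 0 = e + 1) :
    μ.rowLen e < μ.rowLen 0 := by
  have := hflex.mul_add_two_le_card e he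
  have := card_le_rowLen_zero_mul he
  exact lt_of_mul_lt_mul_right (by omega : μ.rowLen e * (e + 1) < μ.rowLen 0 * (e + 1))
    (Nat.zero_le _)

theorem rowLen_one_add_le (hα : AlmostEqualRuns a α (r + 1)) (hμ : FitsRuns μ α (r + 1)) :
    μ.rowLen 1 + r ≤ runStart α (r + 1) := by
  have hcard := hμ.card_eq
  rw [runStart_succ] at hcard
  have htwo := two_mul_rowLen_one_le_card (μ := μ)
  have hb := hα.run_le _ le_rfl
  have hM := hα.two_mul_le_runStart
  rcases le_or_gt a 1 with ha | ha
  · omega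
  · have hM' := hα.mul_le_runStart
    obtain ⟨a', rfl⟩ := Nat.exists_eq_add_of_le' ha
    nlinarith

theorem rowLen_bottom_le_run (hα : AlmostEqualRuns a α (r + 1)) (hμ : FitsRuns μ α (r + 1))
    (he : μ.colLen 0 = r + 1 + 1) : μ.rowLen (r + 1) ≤ α (r + 1) := by
  have hcard := hμ.card_eq
  rw [runStart_succ] at hcard
  have hlow := rowLen_mul_le_card he
  have hM := hα.runStart_le_mul
  have hb := hα.le_run _ le_rfl
  by_contra! hlt
  have hmul := Nat.mul_le_mul hlt (le_refl (r + 1 + 1))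
  nlinarith

theorem two_mul_rowLen_one_le_runStart (hα : AlmostEqualRuns a α (r + 1))
    (hμ : FitsRuns μ α (r + 1)) (he : μ.colLen 0 = 1 + 1)
    (h : runStart α (r + 1 + 1) ≤ μ.rowLen 0 + 1 + r ∨ α (r + 1) = 1 ∨
      IsFlexible μ α (r + 1) ∧ α (r + 1) = 2) :
    2 * μ.rowLen 1 ≤ runStart α (r + 1) := by
  have hcard := hμ.card_eq
  have hle := card_le_rowLen_zero_add he
  have hanti := μ.rowLen_anti 0 1 zero_le_one
  have hM := hα.two_mul_le_runStart
  have hlow := rowLen_zero_add_le_card he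
  rcases h with hcols | hone | ⟨hflex, htwo⟩
  · omega
  · have ha : a = 1 := le_antisymm (hone ▸ hα.le_run _ le_rfl) hα.pos
    have hM' := hα.runStart_le_mul
    rw [runStart_succ, hone] at hcard
    rw [ha] at hM'
    omega
  · have := hflex.mul_add_two_le_card 1 he
    rw [runStart_succ, htwo] at hcard
    omega

theorem rowLen_bottom_add_lt (hα : AlmostEqualRuns a α (r + 1)) (hμ : FitsRuns μ α (r + 1))
    (hr : 1 ≤ r) {k : ℕ} (hk : k ≤ 1) (hcard : μ.rowLen r * (r + 1) + 2 * k ≤ μ.card) :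
    μ.rowLen r + k < α (r + 1) + α r := by
  rw [hμ.card_eq, runStart_succ, runStart_succ] at hcard
  have hM := hα.of_succ.runStart_le_mul
  have hb := hα.le_run _ le_rfl
  have hb' := hα.two_le_run r (Nat.lt_succ_self r)
  by_contra! hge
  have hmul := Nat.mul_le_mul (show a + 2 ≤ μ.rowLen r + k by omega) (le_refl r)
  have hkr : k * r ≤ r := by simpa using Nat.mul_le_mul_right r hk
  have hk0 : k = 0 ∨ k = 1 := by omega
  rcases hk0 with rfl | rfl <;> nlinarith

end FitsRuns

/-- `h` is a suitable number of cells to remove from the bottom row `e` of `μ` together with a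
horizontal strip of total size `α (r + 1)`: what remains fits the runs `0, …, r`, and the last
entry of a tableau of the remaining shape can be kept above row `e`. -/
structure IsBottomShare (μ : YoungDiagram) (α : ℕ → ℕ) (r e h : ℕ) : Prop where
  pos : 1 ≤ h
  le_rowLen : h ≤ μ.rowLen e
  le_run : h ≤ α (r + 1)
  lt_run : IsFlexible μ α (r + 1) → h < α (r + 1)
  run_add_le : α (r + 1) + μ.rowLen e ≤ μ.rowLen 0 + h
  rowLen_zero_add_le : μ.rowLen 0 + h + r ≤ runStart α (r + 1 + 1)
  eq_rowLen : e = r + 1 → h = μ.rowLen e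
  mul_add_two_le : h < μ.rowLen e → (μ.rowLen e - h) * (e + 1) + 2 ≤ runStart α (r + 1)
  sub_ne_run : h < μ.rowLen e → e = r → μ.rowLen e - h ≠ α r

section BottomShare

variable {μ : YoungDiagram} {α : ℕ → ℕ} {a r e : ℕ}

theorem exists_maximal_share (hα : AlmostEqualRuns a α (r + 1)) :
    ∃ s, 1 ≤ s ∧ (s = α (r + 1) ∧ ¬ IsFlexible μ α (r + 1) ∨
      s + 1 = α (r + 1) ∧ IsFlexible μ α (r + 1)) := by
  by_cases hflex : IsFlexible μ α (r + 1)
  · have := hflex.two_le_run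
    exact ⟨α (r + 1) - 1, by omega, Or.inr ⟨by omega, hflex⟩⟩
  · have := hα.le_run _ le_rfl
    have := hα.pos
    exact ⟨α (r + 1), by omega, Or.inl ⟨rfl, hflex⟩⟩

theorem sub_mul_add_two_le_runStart (hα : AlmostEqualRuns a α (r + 1))
    (hμ : FitsRuns μ α (r + 1)) (he : μ.colLen 0 = e + 1) (he1 : 1 ≤ e) {h s : ℕ} (hh : 1 ≤ h)
    (hlt : h < μ.rowLen e) (hadd : α (r + 1) + μ.rowLen e ≤ μ.rowLen 0 + h)
    (hs : s = α (r + 1) ∨ s + 1 = α (r + 1) ∧ IsFlexible μ α (r + 1))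
    (hmin : s ≤ h ∨ runStart α (r + 1 + 1) ≤ μ.rowLen 0 + h + r) :
    (μ.rowLen e - h) * (e + 1) + 2 ≤ runStart α (r + 1) := by
  have hlow := rowLen_zero_add_le_card he
  have hb := hα.le_run _ le_rfl
  have ha := hα.pos
  obtain ⟨m, hm⟩ := Nat.exists_eq_add_of_lt hlt
  by_cases hsmall : e = 1 ∧ h = 1
  · obtain ⟨rfl, rfl⟩ := hsmall
    have := two_mul_rowLen_one_le_runStart hα hμ he (by
      rcases hmin with hmin | hmin
      · rcases hs with hs | ⟨hs, hflex⟩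
        · omega
        · rcases Nat.lt_or_ge 1 (α (r + 1)) with h | h
          · exact Or.inr (Or.inr ⟨hflex, by omega⟩)
          · omega
      · exact Or.inl hmin)
    omega
  · rw [hμ.card_eq, runStart_succ] at hlow
    have hhe : 2 ≤ h * e := by
      rcases Nat.lt_or_ge h 2 with h2 | h2
      · rw [show h = 1 by omega, one_mul]
        omega
      · nlinarith
    rw [show μ.rowLen e - h = m + 1 by omega]
    rw [show μ.rowLen e = h + (m + 1) by omega] at hlow hadd
    nlinarith

theorem sub_ne_run (hα : AlmostEqualRuns a α (r + 1)) (hμ : FitsRuns μ α (r + 1))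
    (he : μ.colLen 0 = r + 1) (hr : 1 ≤ r) {h s : ℕ}
    (hs : s = α (r + 1) ∨ s + 1 = α (r + 1) ∧ IsFlexible μ α (r + 1))
    (hmin : s ≤ h ∨ runStart α (r + 1 + 1) ≤ μ.rowLen 0 + h + r) :
    μ.rowLen r - h ≠ α r := by
  have hb' := hα.two_le_run r (Nat.lt_succ_self r)
  rcases hmin with hmin | hmin
  · rcases hs with rfl | ⟨hs, hflex⟩
    · have := rowLen_bottom_add_lt hα hμ hr zero_le_one (rowLen_mul_le_card he)
      omega
    · have := rowLen_bottom_add_lt hα hμ hr le_rfl (hflex.mul_add_two_le_card r he)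
      omega
  · have := rowLen_add_rowLen_zero_add_le_card he hr
    have := hμ.card_eq
    omega

theorem run_add_rowLen_bottom_le (hα : AlmostEqualRuns a α (r + 1)) (hμ : FitsRuns μ α (r + 1))
    (he : μ.colLen 0 = e + 1) (he1 : 1 ≤ e) {h s : ℕ}
    (hs : s = α (r + 1) ∨ s + 1 = α (r + 1) ∧ IsFlexible μ α (r + 1))
    (hmin : h = μ.rowLen e ∨ s ≤ h ∨ runStart α (r + 1 + 1) ≤ μ.rowLen 0 + h + r) :
    α (r + 1) + μ.rowLen e ≤ μ.rowLen 0 + h := by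
  have hb := run_le_rowLen_zero hα hμ
  have hsum := runStart_succ α (r + 1)
  have hsecond := rowLen_one_add_le hα hμ
  have hlast := μ.rowLen_anti 1 e he1
  have hfirst := μ.rowLen_anti 0 e (Nat.zero_le e)
  rcases hs with rfl | ⟨hs, hflex⟩
  · omega
  · have := hflex.rowLen_lt_rowLen_zero he
    omega

theorem exists_isBottomShare (hα : AlmostEqualRuns a α (r + 1)) (hμ : FitsRuns μ α (r + 1))
    (he : μ.colLen 0 = e + 1) (he1 : 1 ≤ e) : ∃ h, IsBottomShare μ α r e h := by
  obtain ⟨s, hs1, hs⟩ := exists_maximal_share (μ := μ) hα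
  obtain ⟨h, hhs, hhq, hhC, hmin⟩ : ∃ h, h ≤ s ∧ h ≤ μ.rowLen e ∧
      μ.rowLen 0 + h + r ≤ runStart α (r + 1 + 1) ∧
      (h = μ.rowLen e ∨ h < μ.rowLen e ∧
        (s ≤ h ∨ runStart α (r + 1 + 1) ≤ μ.rowLen 0 + h + r)) := by
    have := hμ.rowLen_add_le
    exact ⟨min (min s (μ.rowLen e)) (runStart α (r + 1 + 1) - μ.rowLen 0 - r), by omega⟩
  have hs' : s = α (r + 1) ∨ s + 1 = α (r + 1) ∧ IsFlexible μ α (r + 1) := by tauto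
  have hq : 1 ≤ μ.rowLen e := (rowLen_pos_iff_lt_colLen μ e).2 (by omega)
  have hcols := hμ.rowLen_add_le
  have hh : 1 ≤ h := by omega
  have hadd := run_add_rowLen_bottom_le hα hμ he he1 hs' (h := h) (by omega)
  refine ⟨h, hh, hhq, by omega, fun hflex => ?_, hadd, hhC, fun her => ?_, fun hlt => ?_,
    fun hlt her => ?_⟩
  · rcases hs with ⟨-, hs⟩ | ⟨hs, -⟩
    · exact absurd hflex hs
    · omega
  · subst her
    have hqb := rowLen_bottom_le_run hα hμ he
    have hcorner := rowLen_add_rowLen_zero_add_le_card he he1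
    have hcard := hμ.card_eq
    have : s < α (r + 1) → μ.rowLen (r + 1) ≠ α (r + 1) := fun hlt => by
      rcases hs with ⟨hs, -⟩ | ⟨-, hflex⟩
      · omega
      · exact hflex.rowLen_ne_run he
    omega
  · exact sub_mul_add_two_le_runStart hα hμ he he1 hh hlt hadd hs' (by omega)
  · subst her
    exact sub_ne_run hα hμ he he1 hs' (by omega)

end BottomShare

/-- The runs of `D` up to run `r`, each a maximal interval without descents in its interior, have
lengths `α 0, …, α r`. -/
structure HasRuns (D : ℕ → Prop) (α : ℕ → ℕ) (r : ℕ) : Prop where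
  descent : ∀ i < r, ∀ k, k + 1 = runStart α (i + 1) → D k
  not_descent : ∀ i ≤ r, ∀ k, runStart α i ≤ k → k + 1 < runStart α (i + 1) → ¬ D k

theorem HasRuns.of_succ {D : ℕ → Prop} {α : ℕ → ℕ} {r : ℕ} (hD : HasRuns D α (r + 1)) :
    HasRuns D α r where
  descent i hi := hD.descent i (by omega)
  not_descent i hi := hD.not_descent i (by omega)

section RowByRow

variable {D : ℕ → Prop} {μ ν : YoungDiagram} {α : ℕ → ℕ} {a r e h n : ℕ} {c : ℕ × ℕ}

theorem exists_hasTableau_of_single_row (hrow : μ.colLen 0 ≤ 1) (hcard : μ.card = n + 1)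
    (hD : ∀ k < n, ¬ D k) : ∃ c, HasTableau D n μ c := by
  have hfst : ∀ d ∈ μ, d.1 = 0 := fun d hd => by
    have := YoungDiagram.mem_iff_lt_colLen.1 (μ.up_left_mem le_rfl (Nat.zero_le d.2) hd)
    omega
  obtain ⟨ν, hν⟩ := exists_cells_eq_insert ⊥ (0, 0) fun e he => absurd he not_lt_bot
  have hmem : ∀ d, d ∈ ν ↔ d = (0, 0) := fun d => by simp [mem_iff_of_cells_eq_insert hν]
  have hcardν : ν.card = 1 := by simp [YoungDiagram.card, hν]
  have hzero : (0, 0) ∈ μ := by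
    obtain ⟨d, hd⟩ := Finset.card_pos.1 (show 0 < μ.card by omega)
    exact μ.up_left_mem (Nat.zero_le d.1) (Nat.zero_le d.2) hd
  have hstrip : IsHorizontalStrip ν μ :=
    ⟨fun d hd => (hmem d).1 hd ▸ hzero, fun i j h => absurd (hfst _ h) (Nat.succ_ne_zero i)⟩
  have hsingle : HasTableau D 0 ν (0, 0) := .single (by simpa using hν)
  obtain ⟨c, hc, -, -⟩ := hsingle.exists_extension_of_forall_not hstrip (m := n)
    (fun d hd hdν => Nat.pos_of_ne_zero fun h => hdν ((hmem d).2 (Prod.ext (hfst d hd) h)))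
    (by omega) (fun k _ hk => hD k (by omega))
  exact ⟨c, by rwa [zero_add] at hc⟩

theorem not_isFlexible_zero (hμ : FitsRuns μ α 0) : ¬ IsFlexible μ α 0 := fun hflex => by
  have hcard := hμ.card_eq
  have hrows := hμ.colLen_le
  have hrun := hflex.two_le_run
  rw [runStart_succ] at hcard
  have hcol : μ.colLen 0 ≠ 0 := fun h => by
    have := card_eq_sum_rowLen μ
    rw [h, Finset.sum_range_zero] at this
    omega
  have hone : μ.colLen 0 = 0 + 1 := by omega
  have := hflex.mul_add_two_le_card 0 hone
  have := card_le_rowLen_zero_mul hone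
  omega

theorem IsBottomShare.fitsRuns (hh : IsBottomShare μ α r e h) (hα : AlmostEqualRuns a α (r + 1))
    (hμ : FitsRuns μ α (r + 1)) (he : μ.colLen 0 = e + 1) (hle : ν ≤ μ)
    (hcard : ν.card + α (r + 1) = μ.card)
    (hν0 : ν.rowLen 0 ≤ max (μ.rowLen 1) (μ.rowLen 0 - (α (r + 1) - h)))
    (hνe : ν.rowLen e = μ.rowLen e - h) : FitsRuns ν α r := by
  have hsucc := runStart_succ α (r + 1)
  refine ⟨?_, ?_, ?_⟩
  · have := hμ.card_eq
    omega
  · have hrows := hμ.colLen_le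
    rcases eq_or_ne e (r + 1) with rfl | hne
    · rw [colLen_zero_le_iff, hνe, hh.eq_rowLen rfl, Nat.sub_self]
    · exact (colLen_zero_le_of_le hle).trans (by omega)
  · have := rowLen_one_add_le hα hμ
    have := hh.rowLen_zero_add_le
    have := hh.le_run
    have := run_le_rowLen_zero hα hμ
    omega

theorem IsBottomShare.fst_lt (hh : IsBottomShare μ α r e h) (hα : AlmostEqualRuns a α (r + 1))
    (hμ : FitsRuns μ α (r + 1)) (he : μ.colLen 0 = e + 1) (hle : ν ≤ μ)
    (hcard : ν.card + α (r + 1) = μ.card) (hνe : ν.rowLen e = μ.rowLen e - h) (hc : c ∈ ν)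
    (hflex : IsFlexible ν α r → c.1 + 1 < ν.colLen 0) : c.1 < e := by
  have hcν : c.1 < ν.colLen 0 :=
    YoungDiagram.mem_iff_lt_colLen.1 (ν.up_left_mem le_rfl (Nat.zero_le c.2) hc)
  rcases hh.le_rowLen.eq_or_lt with heq | hlt
  · rw [heq, Nat.sub_self, ← colLen_zero_le_iff] at hνe
    exact hcν.trans_le hνe
  · have hcol : ν.colLen 0 = e + 1 := by
      have := (rowLen_pos_iff_lt_colLen ν e).1 (by omega)
      have := colLen_zero_le_of_le hle
      omega
    have := hflex ⟨hα.two_le_run r (Nat.lt_succ_self r), fun e' he' => ?_, fun hr => ?_⟩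
    · omega
    · obtain rfl : e' = e := by omega
      have := hμ.card_eq
      have := runStart_succ α (r + 1)
      have := hh.mul_add_two_le hlt
      rw [hνe]
      omega
    · obtain rfl : e = r := by omega
      exact hνe ▸ hh.sub_ne_run hlt rfl

theorem exists_hasTableau_of_hasRuns (hα : AlmostEqualRuns a α r) (hD : HasRuns D α r)
    (hμ : FitsRuns μ α r) (hn : n + 1 = runStart α (r + 1)) :
    ∃ c, HasTableau D n μ c ∧ (IsFlexible μ α r → c.1 + 1 < μ.colLen 0) := by
  induction r generalizing μ n with
  | zero =>
    obtain ⟨c, hc⟩ := exists_hasTableau_of_single_row hμ.colLen_le (hμ.card_eq.trans hn.symm)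
      fun k hk => hD.not_descent 0 le_rfl k (by simp [runStart]) (by omega)
    exact ⟨c, hc, fun hflex => absurd hflex (not_isFlexible_zero hμ)⟩
  | succ r ih =>
    obtain ⟨e, he1, -, he⟩ := hμ.exists_colLen_eq
    obtain ⟨h, hh⟩ := exists_isBottomShare hα hμ he he1
    obtain ⟨ν, hstrip, hcard, hν0, hνe, habove⟩ :=
      exists_isHorizontalStrip he hh.le_rowLen hh.le_run hh.run_add_le
    have hν : FitsRuns ν α r := hh.fitsRuns hα hμ he hstrip.le hcard hν0 hνe
    have hsucc := runStart_succ α (r + 1)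
    obtain ⟨n', hn'⟩ : ∃ n', n' + 1 = runStart α (r + 1) :=
      ⟨runStart α (r + 1) - 1, by have := hα.two_mul_le_runStart; omega⟩
    obtain ⟨c', hc', hflex'⟩ := ih hα.of_succ hD.of_succ hν hn'
    have hjunction : c'.1 < e := hh.fst_lt hα hμ he hstrip.le hcard hνe hc'.mem hflex'
    have hbottom : (e, μ.rowLen e - h) ∈ μ ∧ (e, μ.rowLen e - h) ∉ ν := by
      have := hh.pos
      have := hh.le_rowLen
      rw [YoungDiagram.mem_iff_lt_rowLen, YoungDiagram.mem_iff_lt_rowLen]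
      omega
    obtain ⟨c, hc, hlow⟩ := hc'.exists_extension_of_descent hstrip hcard.symm
      (hD.descent r (Nat.lt_succ_self r) n' hn')
      (fun k hk hk' => hD.not_descent (r + 1) le_rfl k (by omega) (by omega))
      ⟨_, hbottom.1, hbottom.2, hjunction⟩
    refine ⟨c, by rwa [show n = n' + α (r + 1) by omega], fun hflex => ?_⟩
    obtain ⟨d, hdμ, hdν, hde⟩ := habove (hh.lt_run hflex)
    have := hlow d hdμ hdν
    omega

end RowByRow

/-- The number of `k < N` preceded by exactly `i` elements of `D`: the length of the `i`-th row of
a lattice path with `N` boxes that steps to a new row after box `k` exactly when `D k`. -/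
def runLength (D : ℕ → Prop) [DecidablePred D] (N i : ℕ) : ℕ :=
  ((Finset.range N).filter fun k => Nat.count D k = i).card

/-- The rows of the lattice path with `n + 1` boxes and row changes `D` differ in length by at
most one. -/
def RunsEquitable (D : ℕ → Prop) [DecidablePred D] (n : ℕ) : Prop :=
  ∀ i ≤ Nat.count D n, ∀ j ≤ Nat.count D n, runLength D (n + 1) i ≤ runLength D (n + 1) j + 1

section RunLength

variable {D D' : ℕ → Prop} [DecidablePred D] [DecidablePred D'] {N n i k m : ℕ}

theorem count_add_count_of_iff_not (h : ∀ k, D' k ↔ ¬ D k) (n : ℕ) :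
    Nat.count D n + Nat.count D' n = n := by
  induction n with
  | zero => simp
  | succ n ih =>
    have := h n
    rw [Nat.count_succ, Nat.count_succ]
    split_ifs <;> grind

theorem le_runLength (hkm : k + m ≤ N) (h : ∀ x, k ≤ x → x < k + m → Nat.count D x = i) :
    m ≤ runLength D N i := by
  have hsub : Finset.Ico k (k + m) ⊆ (Finset.range N).filter fun x => Nat.count D x = i :=
    fun x hx => by
      rw [Finset.mem_Ico] at hx
      exact Finset.mem_filter.2 ⟨Finset.mem_range.2 (by omega), h x hx.1 hx.2⟩
  simpa [runLength] using Finset.card_le_card hsub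

theorem runStart_runLength (D : ℕ → Prop) [DecidablePred D] (N i : ℕ) :
    runStart (runLength D N) i = ((Finset.range N).filter fun k => Nat.count D k < i).card := by
  induction i with
  | zero => simp [runStart]
  | succ i ih =>
    rw [runStart_succ, ih, runLength, ← Finset.card_union_of_disjoint]
    · congr 1
      ext k
      simp only [Finset.mem_union, Finset.mem_filter, Finset.mem_range]
      omega
    · rw [Finset.disjoint_filter]
      omega

theorem lt_runStart_iff (hk : k < N) : k < runStart (runLength D N) i ↔ Nat.count D k < i := by
  rw [runStart_runLength]
  constructor
  · intro hlt
    by_contra! hge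
    have hsub : (Finset.range N).filter (fun x => Nat.count D x < i) ⊆ Finset.range k :=
      fun x hx => by
        rw [Finset.mem_filter] at hx
        rw [Finset.mem_range]
        by_contra! hkx
        exact (hge.trans (Nat.count_monotone D hkx)).not_gt hx.2
    have := Finset.card_le_card hsub
    rw [Finset.card_range] at this
    omega
  · intro hlt
    have hsub : Finset.range (k + 1) ⊆ (Finset.range N).filter fun x => Nat.count D x < i :=
      fun x hx => by
        rw [Finset.mem_range] at hx
        exact Finset.mem_filter.2 ⟨Finset.mem_range.2 (by omega),
          (Nat.count_monotone D (Nat.lt_succ_iff.1 hx)).trans_lt hlt⟩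
    have := Finset.card_le_card hsub
    rw [Finset.card_range] at this
    omega

theorem runStart_runLength_le (D : ℕ → Prop) [DecidablePred D] (N i : ℕ) :
    runStart (runLength D N) i ≤ N := by
  rw [runStart_runLength]
  simpa using Finset.card_filter_le (Finset.range N) fun k => Nat.count D k < i

theorem runStart_runLength_count_succ (D : ℕ → Prop) [DecidablePred D] (n : ℕ) :
    runStart (runLength D (n + 1)) (Nat.count D n + 1) = n + 1 :=
  le_antisymm (runStart_runLength_le D _ _)
    (Nat.succ_le_of_lt ((lt_runStart_iff n.lt_succ_self).2 (Nat.count D n).lt_succ_self))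

theorem hasRuns_runLength (D : ℕ → Prop) [DecidablePred D] (n : ℕ) :
    HasRuns D (runLength D (n + 1)) (Nat.count D n) where
  descent i hi k hk := by
    have hle := runStart_runLength_le D (n + 1) (i + 1)
    have hcount : Nat.count D k < i + 1 := (lt_runStart_iff (N := n + 1) (by omega)).1 (by omega)
    have hkn : k < n := lt_of_le_of_ne (by omega) fun h => by
      subst h
      omega
    have hcount' : ¬ Nat.count D (k + 1) < i + 1 := fun h => by
      have := (lt_runStart_iff (N := n + 1) (by omega)).2 h
      omega
    exact Nat.count_lt_count_succ_iff.1 (by omega)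
  not_descent i _ k hk hk' := by
    have hle := runStart_runLength_le D (n + 1) (i + 1)
    have hcount : ¬ Nat.count D k < i := fun h => by
      have := (lt_runStart_iff (N := n + 1) (by omega)).2 h
      omega
    have hcount' : Nat.count D (k + 1) < i + 1 := (lt_runStart_iff (N := n + 1) (by omega)).1 hk'
    exact fun hDk => by
      have := Nat.count_lt_count_succ_iff.2 hDk
      omega

theorem exists_mem_count_eq (hi : i < Nat.count D n) : ∃ k < n, D k ∧ Nat.count D k = i := by
  induction n with
  | zero => simp at hi
  | succ n ih =>
    by_cases h : i < Nat.count D n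
    · obtain ⟨k, hk, hDk, hki⟩ := ih h
      exact ⟨k, by omega, hDk, hki⟩
    · have hDn : D n := Nat.count_lt_count_succ_iff.1 (by omega)
      rw [Nat.count_succ, if_pos hDn] at hi
      exact ⟨n, n.lt_succ_self, hDn, by omega⟩

theorem exists_count_eq (hi : i ≤ Nat.count D n) : ∃ k ≤ n, Nat.count D k = i := by
  rcases hi.eq_or_lt with rfl | hlt
  · exact ⟨n, le_rfl, rfl⟩
  · obtain ⟨k, hk, -, hki⟩ := exists_mem_count_eq hlt
    exact ⟨k, hk.le, hki⟩

theorem RunsEquitable.exists_almostEqualRuns (h : RunsEquitable D n)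
    (htwo : ∀ i < Nat.count D n, 2 ≤ runLength D (n + 1) i) :
    ∃ a, AlmostEqualRuns a (runLength D (n + 1)) (Nat.count D n) := by
  obtain ⟨j, hj, hmin⟩ := Finset.exists_min_image (Finset.range (Nat.count D n + 1))
    (runLength D (n + 1)) ⟨0, by simp⟩
  simp only [Finset.mem_range, Nat.lt_succ_iff] at hj hmin
  refine ⟨runLength D (n + 1) j, ?_, hmin, fun i hi => h i hi j hj, htwo⟩
  obtain ⟨k, hk, hkj⟩ := exists_count_eq hj
  exact le_runLength (k := k) (by omega) fun x hx hx' => by rwa [show x = k by omega]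

theorem zero_or_exists_three_le_runLength (hD' : ∀ k, D' k ↔ ¬ D k) (hi : i < Nat.count D n)
    (hshort : runLength D (n + 1) i < 2) :
    D 0 ∨ ∃ j ≤ Nat.count D' n, 3 ≤ runLength D' (n + 1) j := by
  obtain ⟨k, hkn, hDk, hki⟩ := exists_mem_count_eq hi
  rcases k with _ | k
  · exact Or.inl hDk
  · have hDk' : D k := by
      by_contra hnot
      have : 2 ≤ runLength D (n + 1) i := le_runLength (k := k) (by omega) fun x hx hx' => by
        rcases (by omega : x = k ∨ x = k + 1) with rfl | rfl
        · rwa [← Nat.count_succ_eq_count_iff.2 hnot]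
        · exact hki
      omega
    have hcount : Nat.count D' (k + 1) = Nat.count D' k :=
      Nat.count_succ_eq_count_iff.2 (by rwa [hD', not_not])
    have hcount' : Nat.count D' (k + 1 + 1) = Nat.count D' (k + 1) :=
      Nat.count_succ_eq_count_iff.2 (by rwa [hD', not_not])
    refine Or.inr ⟨Nat.count D' k, Nat.count_monotone D' (by omega), ?_⟩
    refine le_runLength (k := k) (by omega) fun x hx hx' => ?_
    rcases (by omega : x = k ∨ x = k + 1 ∨ x = k + 1 + 1) with rfl | rfl | rfl <;> omega

theorem RunsEquitable.two_le_runLength_or (hD' : ∀ k, D' k ↔ ¬ D k) (h : RunsEquitable D n)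
    (h' : RunsEquitable D' n) :
    (∀ i < Nat.count D n, 2 ≤ runLength D (n + 1) i) ∨
      ∀ i < Nat.count D' n, 2 ≤ runLength D' (n + 1) i := by
  by_contra! ⟨⟨i, hi, hshort⟩, i', hi', hshort'⟩
  have hD0 : D 0 := by
    refine (zero_or_exists_three_le_runLength hD' hi hshort).resolve_right ?_
    rintro ⟨j, hj, hlong⟩
    have := h' j hj i' hi'.le
    omega
  have hD'0 : D' 0 := by
    refine (zero_or_exists_three_le_runLength (D' := D) (fun k => by rw [hD', not_not]) hi'
      hshort').resolve_right ?_
    rintro ⟨j, hj, hlong⟩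
    have := h j hj i hi.le
    omega
  exact (hD' 0).1 hD'0 hD0

end RunLength

section ExistsTableau

theorem card_transpose (μ : YoungDiagram) : μ.transpose.card = μ.card :=
  Finset.card_map _

variable {D : ℕ → Prop} [DecidablePred D] {μ : YoungDiagram} {n : ℕ}

theorem exists_hasTableau_of_two_le_runLength (h : RunsEquitable D n)
    (htwo : ∀ i < Nat.count D n, 2 ≤ runLength D (n + 1) i) (hcard : μ.card = n + 1)
    (hrows : μ.colLen 0 ≤ Nat.count D n + 1) (hcols : μ.rowLen 0 + Nat.count D n ≤ n + 1) :
    ∃ c, HasTableau D n μ c := by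
  obtain ⟨a, hα⟩ := h.exists_almostEqualRuns htwo
  have hsum := runStart_runLength_count_succ D n
  obtain ⟨c, hc, -⟩ := exists_hasTableau_of_hasRuns hα (hasRuns_runLength D n)
    ⟨hcard.trans hsum.symm, hrows, hcols.trans hsum.ge⟩ hsum.symm
  exact ⟨c, hc⟩

theorem exists_hasTableau_of_runsEquitable (h : RunsEquitable D n)
    (h' : RunsEquitable (fun k => ¬ D k) n) (hcard : μ.card = n + 1)
    (hrows : μ.colLen 0 ≤ Nat.count D n + 1)
    (hcols : μ.rowLen 0 ≤ Nat.count (fun k => ¬ D k) n + 1) : ∃ c, HasTableau D n μ c := by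
  have hadd := count_add_count_of_iff_not (D := D) (D' := fun k => ¬ D k) (fun _ => Iff.rfl) n
  rcases h.two_le_runLength_or (fun _ => Iff.rfl) h' with htwo | htwo
  · exact exists_hasTableau_of_two_le_runLength h htwo hcard hrows (by omega)
  · obtain ⟨c, hc⟩ := exists_hasTableau_of_two_le_runLength (μ := μ.transpose) h' htwo
      (by rw [← hcard, card_transpose]) (by rwa [YoungDiagram.colLen_transpose])
      (by rw [YoungDiagram.rowLen_transpose]; omega)
    exact ⟨c.swap, by simpa only [not_not, YoungDiagram.transpose_transpose] using hc.transpose⟩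

end ExistsTableau

/-- `x` is the word of a standard tableau of shape `μ` with `n + 1` entries and descent set `D`:
`x k` is the row containing the `(k + 1)`-st entry. Standardness becomes the lattice property of
`x`, and `μ` becomes its content. -/
structure IsTableauWord (D : ℕ → Prop) (n : ℕ) (μ : YoungDiagram) (x : ℕ → ℕ) : Prop where
  lt_succ : ∀ k < n, D k → x k < x (k + 1)
  succ_le : ∀ k < n, ¬ D k → x (k + 1) ≤ x k
  lattice : ∀ m ≤ n, ∀ i, Nat.count (x · = i + 1) (m + 1) ≤ Nat.count (x · = i) (m + 1)
  count_eq : ∀ i, Nat.count (x · = i) (n + 1) = μ.rowLen i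

section TableauWord

variable {D : ℕ → Prop} {n : ℕ} {μ ν : YoungDiagram} {x : ℕ → ℕ}

theorem count_congr {p q : ℕ → Prop} [DecidablePred p] [DecidablePred q]
    (h : ∀ k < n, (p k ↔ q k)) : Nat.count p n = Nat.count q n :=
  le_antisymm (Nat.count_mono_left fun k hk => (h k hk).1)
    (Nat.count_mono_left fun k hk => (h k hk).2)

theorem isTableauWord_zero (hμ : μ.cells = {(0, 0)}) : IsTableauWord D 0 μ fun _ => 0 := by
  have hcount (i : ℕ) : Nat.count (fun _ => 0 = i) (0 + 1) = μ.rowLen i := by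
    rw [YoungDiagram.rowLen_eq_card, YoungDiagram.row, hμ, Finset.filter_singleton,
      Nat.count_succ, Nat.count_zero, zero_add]
    split_ifs <;> rfl
  refine ⟨by simp, by simp, fun m hm i => ?_, hcount⟩
  rw [Nat.le_zero.1 hm, hcount, hcount]
  exact μ.rowLen_anti _ _ i.le_succ

theorem IsTableauWord.update (hx : IsTableauWord D n ν x) {d : ℕ × ℕ} (hd : d ∉ ν)
    (hμ : μ.cells = insert d ν.cells) (hD : D n ↔ x n < d.1) :
    IsTableauWord D (n + 1) μ (Function.update x (n + 1) d.1) := by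
  set y := Function.update x (n + 1) d.1
  have hlast : y (n + 1) = d.1 := Function.update_self ..
  have hinit (k : ℕ) (hk : k ≤ n) : y k = x k := Function.update_of_ne (by omega) ..
  have hcount_init (m : ℕ) (hm : m ≤ n) (i : ℕ) :
      Nat.count (y · = i) (m + 1) = Nat.count (x · = i) (m + 1) :=
    count_congr fun k hk => by rw [hinit k (by omega)]
  have hcount (i : ℕ) : Nat.count (y · = i) (n + 1 + 1) = μ.rowLen i := by
    rw [Nat.count_succ, hcount_init n le_rfl, hx.count_eq, hlast, rowLen_of_cells_eq_insert hd hμ]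
  refine ⟨fun k hk hDk => ?_, fun k hk hDk => ?_, fun m hm i => ?_, hcount⟩
  · rw [hinit k (by omega)]
    rcases (Nat.lt_succ_iff.1 hk).eq_or_lt with rfl | hkn
    · exact hlast ▸ hD.1 hDk
    · exact hinit (k + 1) hkn ▸ hx.lt_succ k hkn hDk
  · rw [hinit k (by omega)]
    rcases (Nat.lt_succ_iff.1 hk).eq_or_lt with rfl | hkn
    · exact hlast ▸ not_lt.1 (mt hD.2 hDk)
    · exact hinit (k + 1) hkn ▸ hx.succ_le k hkn hDk
  · rcases hm.eq_or_lt with rfl | hmn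
    · rw [hcount, hcount]
      exact μ.rowLen_anti _ _ i.le_succ
    · rw [hcount_init m (by omega), hcount_init m (by omega)]
      exact hx.lattice m (by omega) i

theorem HasTableau.exists_isTableauWord {c : ℕ × ℕ} (h : HasTableau D n μ c) :
    ∃ x, x n = c.1 ∧ IsTableauWord D n μ x := by
  induction h with
  | single hμ => exact ⟨fun _ => 0, rfl, isTableauWord_zero hμ⟩
  | insert _ hd hμ hD ih =>
    obtain ⟨x, hxc, hx⟩ := ih
    exact ⟨_, Function.update_self .., hx.update hd hμ (by rwa [hxc])⟩

namespace IsTableauWord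

variable {k l : ℕ}

theorem le_of_forall_not (hx : IsTableauWord D n μ x) (hkl : k ≤ l) (hl : l ≤ n)
    (hD : ∀ m, k ≤ m → m < l → ¬ D m) : x l ≤ x k := by
  induction l, hkl using Nat.le_induction with
  | base => exact le_rfl
  | succ l hkl ih =>
    exact (hx.succ_le l hl (hD l hkl l.lt_succ_self)).trans
      (ih (Nat.le_of_succ_le hl) fun m hkm hml => hD m hkm (hml.trans l.lt_succ_self))

theorem lt_of_forall (hx : IsTableauWord D n μ x) (hkl : k < l) (hl : l ≤ n)
    (hD : ∀ m, k ≤ m → m < l → D m) : x k < x l := by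
  induction l, hkl using Nat.le_induction with
  | base => exact hx.lt_succ k hl (hD k le_rfl k.lt_succ_self)
  | succ l hkl ih =>
    exact (ih (Nat.le_of_succ_le hl) fun m hkm hml => hD m hkm (hml.trans l.lt_succ_self)).trans
      (hx.lt_succ l hl (hD l (Nat.le_of_succ_le hkl) l.lt_succ_self))

end IsTableauWord

end TableauWord

section Partition

/-- The Young diagram whose row lengths are the elements of `lam` in decreasing order. -/
def diagramOfParts (lam : Multiset ℕ) : YoungDiagram :=
  YoungDiagram.ofRowLens (lam.sort (· ≥ ·)) (Multiset.pairwise_sort lam (· ≥ ·)).sortedGE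

variable {lam : Multiset ℕ}

theorem rowLens_diagramOfParts (h0 : 0 ∉ lam) :
    (diagramOfParts lam).rowLens = lam.sort (· ≥ ·) :=
  YoungDiagram.rowLens_ofRowLens_eq_self fun _ hx =>
    Nat.pos_of_ne_zero fun h => h0 (h ▸ (Multiset.mem_sort _).1 hx)

theorem colLen_diagramOfParts (h0 : 0 ∉ lam) :
    (diagramOfParts lam).colLen 0 = Multiset.card lam := by
  rw [← YoungDiagram.length_rowLens, rowLens_diagramOfParts h0, Multiset.length_sort]

theorem rowLen_diagramOfParts (h0 : 0 ∉ lam) (i : ℕ) :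
    (diagramOfParts lam).rowLen i = part lam i := by
  rw [part, ← rowLens_diagramOfParts h0, YoungDiagram.rowLens]
  rcases Nat.lt_or_ge i ((diagramOfParts lam).colLen 0) with hi | hi
  · simp [hi]
  · rw [List.getD_eq_default _ _ (by simpa using hi)]
    exact colLen_zero_le_iff.1 hi

theorem card_diagramOfParts (h0 : 0 ∉ lam) : (diagramOfParts lam).card = lam.sum := by
  calc (diagramOfParts lam).card = (diagramOfParts lam).rowLens.sum := card_eq_sum_rowLen _
    _ = lam.sum := by
      rw [rowLens_diagramOfParts h0, ← Multiset.sum_coe, Multiset.sort_eq]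

theorem rowLen_zero_diagramOfParts_le (h0 : 0 ∉ lam) {b : ℕ} (hb : ∀ x ∈ lam, x ≤ b) :
    (diagramOfParts lam).rowLen 0 ≤ b := by
  rcases Nat.eq_zero_or_pos ((diagramOfParts lam).rowLen 0) with h | hpos
  · omega
  · refine hb _ ((Multiset.mem_sort (· ≥ ·)).1 ?_)
    rw [← rowLens_diagramOfParts h0]
    exact List.mem_map.2 ⟨0, List.mem_range.2 ((rowLen_pos_iff_lt_colLen _ 0).1 hpos), rfl⟩

end Partition

/-- The content of a box, up to sign: it increases by one with each step down or to the left. -/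
def diagonal (c : ℕ × ℕ) : ℤ := (c.1 : ℤ) - c.2

namespace SkewShape

section Geometry

variable {R : SkewShape} {c d : ℕ × ℕ}

theorem mem_cells_of_le_of_le (hc : c ∈ R.cells) (hd : d ∈ R.cells) {e : ℕ × ℕ} (hce : c ≤ e)
    (hed : e ≤ d) : e ∈ R.cells := by
  rw [cells, Finset.mem_sdiff] at *
  exact ⟨R.outer.isLowerSet hed hd.1, fun he => hc.2 (R.inner.isLowerSet hce he)⟩

theorem Ribbon.snd_le_of_fst_lt (hR : R.Ribbon) (hc : c ∈ R.cells) (hd : d ∈ R.cells)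
    (h : c.1 < d.1) : d.2 ≤ c.2 := by
  by_contra! h'
  have hmem (i j : ℕ) (hi : i ≤ 1) (hj : j ≤ 1) : (c.1 + i, c.2 + j) ∈ R.cells :=
    mem_cells_of_le_of_le hc hd (Prod.mk_le_mk.2 ⟨by omega, by omega⟩)
      (Prod.mk_le_mk.2 ⟨by omega, by omega⟩)
  exact hR.2 c.1 c.2 ⟨hc, hmem 0 1 zero_le_one le_rfl, hmem 1 0 le_rfl zero_le_one,
    hmem 1 1 le_rfl le_rfl⟩

theorem Ribbon.injOn_diagonal (hR : R.Ribbon) : Set.InjOn diagonal (R.cells : Set (ℕ × ℕ)) := by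
  intro c hc d hd h
  have hcd := hR.snd_le_of_fst_lt hc hd
  have hdc := hR.snd_le_of_fst_lt hd hc
  rw [diagonal, diagonal] at h
  ext <;> omega

theorem diagonal_mem_of_fst_eq_or_snd_eq {m : ℤ} (hc : c ∈ R.cells) (hd : d ∈ R.cells)
    (hcm : diagonal c ≤ m) (hmd : m ≤ diagonal d) (h : c.1 = d.1 ∨ c.2 = d.2) :
    ∃ e ∈ R.cells, diagonal e = m := by
  simp only [diagonal] at *
  rcases h with h | h
  · exact ⟨(c.1, (c.1 - m).toNat), mem_cells_of_le_of_le hd hc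
      (Prod.mk_le_mk.2 ⟨by omega, by omega⟩) (Prod.mk_le_mk.2 ⟨by omega, by omega⟩), by omega⟩
  · exact ⟨((c.2 + m).toNat, c.2), mem_cells_of_le_of_le hc hd
      (Prod.mk_le_mk.2 ⟨by omega, by omega⟩) (Prod.mk_le_mk.2 ⟨by omega, by omega⟩), by omega⟩

theorem Connected.exists_diagonal_eq (hR : R.Connected) (hc : c ∈ R.cells) (hd : d ∈ R.cells)
    {m : ℤ} (hcm : diagonal c ≤ m) (hmd : m ≤ diagonal d) : ∃ e ∈ R.cells, diagonal e = m := by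
  by_contra! hne
  refine hR.2 ⟨R.cells.filter fun e => diagonal e < m, R.cells.filter fun e => ¬ diagonal e < m,
    ⟨c, Finset.mem_filter.2 ⟨hc, lt_of_le_of_ne hcm (hne c hc)⟩⟩,
    ⟨d, Finset.mem_filter.2 ⟨hd, hmd.not_gt⟩⟩, Finset.filter_union_filter_not_eq _ _,
    Finset.disjoint_iff_inter_eq_empty.1 (Finset.disjoint_filter_filter_not _ _ _),
    fun b hb e he => ?_⟩
  rw [Finset.mem_filter, not_lt] at *
  rw [← not_or]
  intro h
  obtain ⟨f, hf, hfm⟩ := diagonal_mem_of_fst_eq_or_snd_eq hb.1 he.1 hb.2.le he.2 h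
  exact hne f hf hfm

end Geometry

/-- `p 0, …, p n` lists the boxes of `A` from the top right to the bottom left end, moving one box
down or one box to the left at each step. -/
structure IsTraversal (A : SkewShape) (n : ℕ) (p : ℕ → ℕ × ℕ) : Prop where
  mem : ∀ k ≤ n, p k ∈ A.cells
  exists_eq : ∀ c ∈ A.cells, ∃ k ≤ n, p k = c
  step : ∀ k < n, (p (k + 1)).1 = (p k).1 + 1 ∧ (p (k + 1)).2 = (p k).2 ∨
    (p (k + 1)).1 = (p k).1 ∧ (p (k + 1)).2 + 1 = (p k).2

theorem Ribbon.exists_isTraversal {R : SkewShape} (hR : R.Ribbon) :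
    ∃ n p, IsTraversal R n p := by
  obtain ⟨c, hc, hmin⟩ := Finset.exists_min_image R.cells diagonal hR.1.1
  obtain ⟨d, hd, hmax⟩ := Finset.exists_max_image R.cells diagonal hR.1.1
  obtain ⟨n, hn⟩ : ∃ n : ℕ, diagonal d = diagonal c + n :=
    ⟨(diagonal d - diagonal c).toNat, by have := hmin d hd; omega⟩
  have hex (k : ℕ) : ∃ e, k ≤ n → e ∈ R.cells ∧ diagonal e = diagonal c + k := by
    by_cases hk : k ≤ n
    · obtain ⟨e, he, hek⟩ :=
        hR.1.exists_diagonal_eq hc hd (m := diagonal c + k) (by omega) (by omega)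
      exact ⟨e, fun _ => ⟨he, hek⟩⟩
    · exact ⟨c, fun h => absurd h hk⟩
  choose p hp using hex
  refine ⟨n, p, fun k hk => (hp k hk).1, fun e he => ?_, fun k hk => ?_⟩
  · have hce := hmin e he
    have hed := hmax e he
    have hk : (diagonal e - diagonal c).toNat ≤ n := by omega
    exact ⟨_, hk, hR.injOn_diagonal (hp _ hk).1 he (by rw [(hp _ hk).2]; omega)⟩
  · obtain ⟨hmem, hdiag⟩ := hp k hk.le
    obtain ⟨hmem', hdiag'⟩ := hp (k + 1) hk
    have hsnd := hR.snd_le_of_fst_lt hmem hmem'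
    have hsnd' := hR.snd_le_of_fst_lt hmem' hmem
    rw [diagonal] at hdiag hdiag'
    omega

end SkewShape

/-- The path `p` moves to a new row after its `k`-th box. -/
def StepsDown (p : ℕ → ℕ × ℕ) (k : ℕ) : Prop := (p (k + 1)).1 = (p k).1 + 1

instance (p : ℕ → ℕ × ℕ) : DecidablePred (StepsDown p) := fun _ => Nat.decEq _ _

namespace SkewShape.IsTraversal

variable {A : SkewShape} {n : ℕ} {p : ℕ → ℕ × ℕ} {k l : ℕ}

theorem fst_eq (hp : IsTraversal A n p) (hk : k ≤ n) :
    (p k).1 = (p 0).1 + Nat.count (StepsDown p) k := by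
  induction k with
  | zero => simp
  | succ k ih =>
    have hstep := hp.step k hk
    have := ih (Nat.le_of_succ_le hk)
    rw [Nat.count_succ]
    split_ifs with h <;> rw [StepsDown] at h <;> omega

theorem snd_add_eq (hp : IsTraversal A n p) (hk : k ≤ n) :
    (p k).2 + Nat.count (fun k => ¬ StepsDown p k) k = (p 0).2 := by
  induction k with
  | zero => simp
  | succ k ih =>
    have hstep := hp.step k hk
    have := ih (Nat.le_of_succ_le hk)
    rw [Nat.count_succ]
    split_ifs with h <;> rw [StepsDown] at h <;> omega

theorem fst_add_eq_snd_add (hp : IsTraversal A n p) (hk : k ≤ n) :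
    (p k).1 + (p 0).2 = (p k).2 + (p 0).1 + k := by
  have := hp.fst_eq hk
  have := hp.snd_add_eq hk
  have := count_add_count_of_iff_not (D := StepsDown p) (fun _ => Iff.rfl) k
  omega

theorem readsBefore_iff (hp : IsTraversal A n p) (hk : k ≤ n) (hl : l ≤ n) :
    ReadsBefore (p k) (p l) ↔ k ≤ l := by
  have := hp.fst_eq hk
  have := hp.fst_eq hl
  have := hp.fst_add_eq_snd_add hk
  have := hp.fst_add_eq_snd_add hl
  rw [ReadsBefore]
  rcases Nat.lt_or_ge l k with h | h
  · have := Nat.count_monotone (StepsDown p) h.le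
    omega
  · have := Nat.count_monotone (StepsDown p) h
    omega

theorem card_filter (hp : IsTraversal A n p) (P : ℕ × ℕ → Prop) [DecidablePred P] :
    (A.cells.filter P).card = Nat.count (fun k => P (p k)) (n + 1) := by
  rw [Nat.count_eq_card_filter_range]
  symm
  refine Finset.card_nbij p (fun k hk => ?_) (fun k hk l hl hkl => ?_) fun c hc => ?_
  · rw [Finset.mem_coe, Finset.mem_filter, Finset.mem_range, Nat.lt_succ_iff] at hk
    exact Finset.mem_filter.2 ⟨hp.mem k hk.1, hk.2⟩
  · rw [Finset.mem_coe, Finset.mem_filter, Finset.mem_range, Nat.lt_succ_iff] at hk hl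
    have := hp.fst_add_eq_snd_add hk.1
    have := hp.fst_add_eq_snd_add hl.1
    rw [hkl] at *
    omega
  · rw [Finset.mem_coe, Finset.mem_filter] at hc
    obtain ⟨k, hk, rfl⟩ := hp.exists_eq c hc.1
    exact ⟨k, by simpa [Nat.lt_succ_iff] using ⟨hk, hc.2⟩, rfl⟩

theorem size_eq (hp : IsTraversal A n p) : A.size = n + 1 := by
  simpa [size] using hp.card_filter fun _ => True

theorem rowLen_eq (hp : IsTraversal A n p) (i : ℕ) :
    A.rowLen ((p 0).1 + i) = runLength (StepsDown p) (n + 1) i := by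
  rw [rowLen, hp.card_filter, runLength, ← Nat.count_eq_card_filter_range]
  refine count_congr fun k hk => ?_
  have := hp.fst_eq (Nat.lt_succ_iff.1 hk)
  omega

theorem colLen_eq (hp : IsTraversal A n p) {j : ℕ}
    (hj : j ≤ Nat.count (fun k => ¬ StepsDown p k) n) :
    A.colLen ((p 0).2 - j) = runLength (fun k => ¬ StepsDown p k) (n + 1) j := by
  rw [colLen, hp.card_filter, runLength, ← Nat.count_eq_card_filter_range]
  refine count_congr fun k hk => ?_
  have := hp.snd_add_eq (Nat.lt_succ_iff.1 hk)
  have := hp.snd_add_eq le_rfl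
  omega

theorem mem_rowSet (hp : IsTraversal A n p) {i : ℕ} (hi : i ≤ Nat.count (StepsDown p) n) :
    (p 0).1 + i ∈ A.rowSet := by
  obtain ⟨k, hk, rfl⟩ := exists_count_eq hi
  exact Finset.mem_image.2 ⟨p k, hp.mem k hk, hp.fst_eq hk⟩

theorem mem_colSet (hp : IsTraversal A n p) {j : ℕ}
    (hj : j ≤ Nat.count (fun k => ¬ StepsDown p k) n) : (p 0).2 - j ∈ A.colSet := by
  obtain ⟨k, hk, rfl⟩ := exists_count_eq hj
  exact Finset.mem_image.2 ⟨p k, hp.mem k hk, Nat.eq_sub_of_add_eq (hp.snd_add_eq hk)⟩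

theorem numRows_le (hp : IsTraversal A n p) : A.numRows ≤ Nat.count (StepsDown p) n + 1 := by
  have hsub : A.rowSet ⊆
      (Finset.range (Nat.count (StepsDown p) n + 1)).image fun i => (p 0).1 + i := by
    refine Finset.image_subset_iff.2 fun c hc => ?_
    obtain ⟨k, hk, rfl⟩ := hp.exists_eq c hc
    exact Finset.mem_image.2 ⟨_, Finset.mem_range.2 (Nat.lt_succ_iff.2 (Nat.count_monotone _ hk)),
      (hp.fst_eq hk).symm⟩
  exact (Finset.card_le_card hsub).trans (Finset.card_image_le.trans_eq (Finset.card_range _))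

theorem numCols_le (hp : IsTraversal A n p) :
    A.numCols ≤ Nat.count (fun k => ¬ StepsDown p k) n + 1 := by
  have hsub : A.colSet ⊆
      (Finset.range (Nat.count (fun k => ¬ StepsDown p k) n + 1)).image fun j => (p 0).2 - j := by
    refine Finset.image_subset_iff.2 fun c hc => ?_
    obtain ⟨k, hk, rfl⟩ := hp.exists_eq c hc
    exact Finset.mem_image.2 ⟨_, Finset.mem_range.2 (Nat.lt_succ_iff.2 (Nat.count_monotone _ hk)),
      (Nat.eq_sub_of_add_eq (hp.snd_add_eq hk)).symm⟩
  exact (Finset.card_le_card hsub).trans (Finset.card_image_le.trans_eq (Finset.card_range _))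

theorem runsEquitable_of_rowEquitable (hp : IsTraversal A n p) (hA : A.RowEquitable) :
    RunsEquitable (StepsDown p) n := fun i hi j hj => by
  rw [← hp.rowLen_eq, ← hp.rowLen_eq]
  exact hA _ (hp.mem_rowSet hi) _ (hp.mem_rowSet hj)

theorem runsEquitable_of_colEquitable (hp : IsTraversal A n p) (hA : A.ColEquitable) :
    RunsEquitable (fun k => ¬ StepsDown p k) n := fun i hi j hj => by
  rw [← hp.colLen_eq hi, ← hp.colLen_eq hj]
  exact hA _ (hp.mem_colSet hi) _ (hp.mem_colSet hj)

end SkewShape.IsTraversal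

/-- The filling of a path `p` whose entry in the box `p k` is `x k + 1`. -/
def pathFilling (p : ℕ → ℕ × ℕ) (x : ℕ → ℕ) (c : ℕ × ℕ) : ℕ :=
  x (c.1 + (p 0).2 - (c.2 + (p 0).1)) + 1

namespace SkewShape.IsTraversal

variable {A : SkewShape} {n : ℕ} {p : ℕ → ℕ × ℕ} {μ : YoungDiagram} {x : ℕ → ℕ}

theorem pathFilling_apply (hp : IsTraversal A n p) {k : ℕ} (hk : k ≤ n) :
    pathFilling p x (p k) = x k + 1 := by
  rw [pathFilling, hp.fst_add_eq_snd_add hk, Nat.add_sub_cancel_left]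

theorem pathFilling_le_of_fst_eq (hp : IsTraversal A n p) (hx : IsTableauWord (StepsDown p) n μ x)
    {c d : ℕ × ℕ} (hc : c ∈ A.cells) (hd : d ∈ A.cells) (hrow : c.1 = d.1) (hcol : c.2 ≤ d.2) :
    pathFilling p x c ≤ pathFilling p x d := by
  obtain ⟨k, hk, rfl⟩ := hp.exists_eq c hc
  obtain ⟨l, hl, rfl⟩ := hp.exists_eq d hd
  have hlk : l ≤ k := (hp.readsBefore_iff hl hk).1 (Or.inr ⟨hrow.symm, hcol⟩)
  rw [hp.pathFilling_apply hk, hp.pathFilling_apply hl, Nat.succ_le_succ_iff]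
  refine hx.le_of_forall_not hlk hk fun m hlm hmk hm => ?_
  have hlt := Nat.count_strict_mono hm hmk
  have hle := Nat.count_monotone (StepsDown p) hlm
  have := hp.fst_eq hk
  have := hp.fst_eq hl
  omega

theorem pathFilling_lt_of_snd_eq (hp : IsTraversal A n p) (hx : IsTableauWord (StepsDown p) n μ x)
    {c d : ℕ × ℕ} (hc : c ∈ A.cells) (hd : d ∈ A.cells) (hcol : c.2 = d.2) (hrow : c.1 < d.1) :
    pathFilling p x c < pathFilling p x d := by
  obtain ⟨k, hk, rfl⟩ := hp.exists_eq c hc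
  obtain ⟨l, hl, rfl⟩ := hp.exists_eq d hd
  have hkl : k < l := by
    refine lt_of_le_of_ne ((hp.readsBefore_iff hk hl).1 (Or.inl hrow)) fun h => ?_
    exact hrow.ne (h ▸ rfl)
  rw [hp.pathFilling_apply hk, hp.pathFilling_apply hl, Nat.succ_lt_succ_iff]
  refine hx.lt_of_forall hkl hl fun m hkm hml => ?_
  by_contra hm
  have hlt := Nat.count_strict_mono (p := fun k => ¬ StepsDown p k) hm hml
  have hle := Nat.count_monotone (fun k => ¬ StepsDown p k) hkm
  have := hp.snd_add_eq hk
  have := hp.snd_add_eq hl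
  omega

theorem isSsyt_pathFilling (hp : IsTraversal A n p) (hx : IsTableauWord (StepsDown p) n μ x) :
    A.IsSsyt (pathFilling p x) :=
  ⟨fun _ _ => Nat.succ_pos _,
    fun _ _ _ hc hd hcol => hp.pathFilling_le_of_fst_eq hx hc hd rfl hcol,
    fun _ _ _ hc hd hrow => hp.pathFilling_lt_of_snd_eq hx hc hd rfl hrow⟩

theorem card_filter_pathFilling_readsBefore (hp : IsTraversal A n p) {m : ℕ} (hm : m ≤ n)
    (i : ℕ) :
    (A.cells.filter fun c => pathFilling p x c = i + 1 ∧ ReadsBefore c (p m)).card =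
      Nat.count (x · = i) (m + 1) := by
  rw [hp.card_filter, Nat.count_eq_card_filter_range, Nat.count_eq_card_filter_range]
  congr 1
  ext k
  simp only [Finset.mem_filter, Finset.mem_range, Nat.lt_succ_iff]
  constructor
  · rintro ⟨hk, hxk, hkm⟩
    rw [hp.pathFilling_apply hk] at hxk
    exact ⟨(hp.readsBefore_iff hk hm).1 hkm, Nat.succ_injective hxk⟩
  · rintro ⟨hkm, hxk⟩
    have hk := hkm.trans hm
    exact ⟨hk, by rw [hp.pathFilling_apply hk, hxk], (hp.readsBefore_iff hk hm).2 hkm⟩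

theorem isLR_pathFilling (hp : IsTraversal A n p) (hx : IsTableauWord (StepsDown p) n μ x) :
    A.IsLR (pathFilling p x) := by
  refine ⟨hp.isSsyt_pathFilling hx, fun d hd i => ?_⟩
  obtain ⟨m, hm, rfl⟩ := hp.exists_eq d hd
  rw [hp.card_filter_pathFilling_readsBefore hm, hp.card_filter_pathFilling_readsBefore hm]
  exact hx.lattice m hm i

theorem content_pathFilling (hp : IsTraversal A n p) (hx : IsTableauWord (StepsDown p) n μ x)
    (i : ℕ) : A.content (pathFilling p x) (i + 1) = μ.rowLen i := by
  rw [content, hp.card_filter, ← hx.count_eq]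
  refine count_congr fun k hk => ?_
  rw [hp.pathFilling_apply (Nat.lt_succ_iff.1 hk), Nat.succ_inj]

end SkewShape.IsTraversal

/-- Let `R` be an equitable ribbon with `N` boxes.  If `lam` is a
partition of `N` with at most as many nonzero parts as `R` has nonempty rows, and
with largest part at most the number of nonempty columns of `R`, then
`lam ∈ supp R`. -/
theorem mem_support_of_equitable_ribbon (N : ℕ) (R : SkewShape)
    (hrib : R.Ribbon) (heq : R.Equitable) (hsize : R.size = N)
    (lam : Multiset ℕ) (hsum : lam.sum = N) (h0 : 0 ∉ lam)
    (hcard : Multiset.card lam ≤ R.numRows) (hparts : ∀ x ∈ lam, x ≤ R.numCols) :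
    lam ∈ R.supp := by
  obtain ⟨n, p, hp⟩ := hrib.exists_isTraversal
  obtain ⟨c, hc⟩ : ∃ c, HasTableau (StepsDown p) n (diagramOfParts lam) c := by
    refine exists_hasTableau_of_runsEquitable (hp.runsEquitable_of_rowEquitable heq.1)
      (hp.runsEquitable_of_colEquitable heq.2) ?_ ?_ ?_
    · rw [card_diagramOfParts h0, hsum, ← hsize, hp.size_eq]
    · exact (colLen_diagramOfParts h0).trans_le (hcard.trans hp.numRows_le)
    · exact (rowLen_zero_diagramOfParts_le h0 hparts).trans hp.numCols_le
  obtain ⟨x, -, hx⟩ := hc.exists_isTableauWord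
  exact ⟨h0, pathFilling p x, hp.isLR_pathFilling hx, fun i => by
    rw [hp.content_pathFilling hx, rowLen_diagramOfParts h0]⟩
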